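/- arXiv:2407.09917 — 9 statements merged into one kernel-verified Lean document; each statement's English description precedes it below -/
import Mathlib

section
/- Assume ∂_r p₋(r) = ρ₋(r) w₋(r)²/r for all r ∈ (0,r₀). Then the downstream equation ∂_r p₊(r) = ρ₊(r) w₊(r)²/r holds for all r ∈ (0,r₀) if and only if ∂_r (1/M₋²)(r) = ((γ−1)/(4 q₋(r)²)) · (w₋(r)²/r) · ( (γ+1)²/(γ−1 + 2/M₋²(r)) − (γ−1 + 2/M₋²(r)) ) for all r ∈ (0,r₀). (Lemma 2.2 of the paper.) -/
/-!
Let `h = γ - 1 + 2 / M₋²`. The Rankine–Hugoniot relations become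
`p₊ = (2 γ M₋² - (γ - 1)) / (γ + 1) * p₋` and `ρ₊ = (γ + 1) / h * ρ₋`. Differentiating the first one
and inserting `p₋' = ρ₋ a` makes the downstream momentum balance `p₊' = ρ₊ a` an affine equation
for `(1 / M₋²)'` with nonzero leading coefficient; solving it gives the differential equation for
`1 / M₋²`. The argument is local, and the centripetal acceleration `a = w² / r` may be replaced by
any other.
-/

section Algebra

variable {𝕜 : Type*} [Field 𝕜]

/-- The gas constant `μ² = (γ - 1) / (γ + 1)` of the Rankine–Hugoniot relations. -/
def muSq (γ : 𝕜) : 𝕜 := (γ - 1) / (γ + 1)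

/-- The squared speed of sound `c²` of a polytropic gas with pressure `p` and density `ρ`. -/
def soundSpeedSq (γ p ρ : 𝕜) : 𝕜 := γ * p / ρ

/-- The squared Mach number `M²` of the normal velocity `q`. -/
def machSq (γ p ρ q : 𝕜) : 𝕜 := ρ * q ^ 2 / (γ * p)

/-- The pressure `p₊` behind a shock with upstream state `(p, ρ, q)`. -/
def downstreamPressure (γ p ρ q : 𝕜) : 𝕜 :=
  ((1 + muSq γ) * machSq γ p ρ q - muSq γ) * p

/-- The normal velocity `q₊` behind a shock with upstream state `(p, ρ, q)`. -/
def downstreamSpeed (γ p ρ q : 𝕜) : 𝕜 :=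
  muSq γ * (q + (2 / (γ - 1)) * soundSpeedSq γ p ρ / q)

/-- The density `ρ₊` behind a shock with upstream state `(p, ρ, q)`, determined by conservation
of mass across the shock. -/
def downstreamDensity (γ p ρ q : 𝕜) : 𝕜 := ρ * q / downstreamSpeed γ p ρ q

variable {γ p ρ q : 𝕜}

theorem machSq_ne_zero_iff : machSq γ p ρ q ≠ 0 ↔ (ρ ≠ 0 ∧ q ≠ 0) ∧ γ ≠ 0 ∧ p ≠ 0 := by
  simp only [machSq, div_ne_zero_iff, mul_ne_zero_iff, pow_ne_zero_iff two_ne_zero]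

theorem downstreamPressure_eq (hγ : γ + 1 ≠ 0) :
    downstreamPressure γ p ρ q = (2 * γ * machSq γ p ρ q - (γ - 1)) / (γ + 1) * p := by
  unfold downstreamPressure muSq
  field_simp
  ring

theorem downstreamSpeed_eq (hγ : γ - 1 ≠ 0) (hq : q ≠ 0) :
    downstreamSpeed γ p ρ q = (γ - 1 + 2 / machSq γ p ρ q) / (γ + 1) * q := by
  unfold downstreamSpeed muSq soundSpeedSq machSq
  field_simp

theorem downstreamSpeed_ne_zero_iff (hq : q ≠ 0) :
    downstreamSpeed γ p ρ q ≠ 0 ↔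
      γ - 1 ≠ 0 ∧ γ + 1 ≠ 0 ∧ γ - 1 + 2 / machSq γ p ρ q ≠ 0 := by
  rcases eq_or_ne (γ - 1) 0 with hγ | hγ
  · simp [downstreamSpeed, muSq, hγ]
  · simp only [downstreamSpeed_eq hγ hq, mul_ne_zero_iff, div_ne_zero_iff]
    tauto

theorem downstreamDensity_eq (hγ : γ - 1 ≠ 0) (hq : q ≠ 0) :
    downstreamDensity γ p ρ q = (γ + 1) / (γ - 1 + 2 / machSq γ p ρ q) * ρ := by
  rw [downstreamDensity, downstreamSpeed_eq hγ hq, mul_div_mul_right _ _ hq, div_div_eq_mul_div,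
    mul_comm ρ, mul_div_right_comm]

theorem pressureFactor_sub_densityFactor [NeZero (2 : 𝕜)] {m h : 𝕜} (hm : m ≠ 0) (hh : h ≠ 0)
    (h_def : h = γ - 1 + 2 / m) :
    2 * γ * m - (γ - 1) - (γ + 1) ^ 2 / h =
      (γ - 1) * m / 2 * ((γ + 1) ^ 2 / h - h) := by
  have hmh : m * h = (γ - 1) * m + 2 := by rw [h_def]; field_simp
  have h2 : (2 : 𝕜) ≠ 0 := two_ne_zero
  field_simp
  linear_combination ((γ + 1) ^ 2 + (γ - 1) * h) * hmh

/-- With `θ'` the derivative of `1 / M²` and `p' = ρ a`, the first two terms on the left are the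
derivative of the downstream pressure. -/
theorem downstream_momentum_residual [NeZero (2 : 𝕜)] (hM : machSq γ p ρ q ≠ 0)
    (hq : downstreamSpeed γ p ρ q ≠ 0) (a θ' : 𝕜) :
    (2 * γ * machSq γ p ρ q - (γ - 1)) / (γ + 1) * (ρ * a)
          - 2 * γ * p * machSq γ p ρ q ^ 2 / (γ + 1) * θ'
          - downstreamDensity γ p ρ q * a =
      -(2 * γ * p * machSq γ p ρ q ^ 2 / (γ + 1)) *
        (θ' - (γ - 1) / (4 * q ^ 2) * a *
          ((γ + 1) ^ 2 / (γ - 1 + 2 / machSq γ p ρ q) - (γ - 1 + 2 / machSq γ p ρ q))) := by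
  obtain ⟨⟨-, hq₀⟩, hγ₀, hp₀⟩ := machSq_ne_zero_iff.mp hM
  obtain ⟨hγ₁, hγ₂, hh⟩ := (downstreamSpeed_ne_zero_iff hq₀).mp hq
  have momentum_flux : ρ * q ^ 2 = γ * p * machSq γ p ρ q := by
    rw [machSq, mul_div_cancel₀ _ (mul_ne_zero hγ₀ hp₀)]
  have factors := pressureFactor_sub_densityFactor hM hh rfl
  rw [downstreamDensity_eq hγ₁ hq₀]
  generalize machSq γ p ρ q = m at *
  generalize γ - 1 + 2 / m = h at *
  have h2 : (2 : 𝕜) ≠ 0 := two_ne_zero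
  have density_term : (γ + 1) / h * ρ * a = ρ * a / (γ + 1) * ((γ + 1) ^ 2 / h) := by
    field_simp
  have source_coeff : 2 * γ * p * m ^ 2 / (γ + 1) * ((γ - 1) / (4 * q ^ 2) * a) =
      ρ * a / (γ + 1) * ((γ - 1) * m / 2) := by
    rw [show 2 * γ * p * m ^ 2 = 2 * m * (ρ * q ^ 2) by rw [momentum_flux]; ring,
      show (4 : 𝕜) = 2 * 2 by norm_num]
    field_simp
  linear_combination ρ * a / (γ + 1) * factors - density_term
    - ((γ + 1) ^ 2 / h - h) * source_coeff

theorem machSq_pos [LinearOrder 𝕜] [IsStrictOrderedRing 𝕜] (hγ : 0 < γ) (hp : 0 < p) (hρ : 0 < ρ)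
    (hq : 0 < q) : 0 < machSq γ p ρ q := by
  unfold machSq
  positivity

theorem downstreamSpeed_pos [LinearOrder 𝕜] [IsStrictOrderedRing 𝕜] (hγ : 1 < γ) (hp : 0 < p)
    (hρ : 0 < ρ) (hq : 0 < q) : 0 < downstreamSpeed γ p ρ q := by
  have : 0 < γ - 1 := sub_pos.mpr hγ
  have : 0 < γ := one_pos.trans hγ
  unfold downstreamSpeed muSq soundSpeedSq
  positivity

end Algebra

section Calculus

variable {𝕜 : Type*} [NontriviallyNormedField 𝕜] {γ x : 𝕜} {p ρ q : 𝕜 → 𝕜}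

theorem differentiableAt_machSq (hp : DifferentiableAt 𝕜 p x) (hρ : DifferentiableAt 𝕜 ρ x)
    (hq : DifferentiableAt 𝕜 q x) (h₀ : γ * p x ≠ 0) :
    DifferentiableAt 𝕜 (fun y => machSq γ (p y) (ρ y) (q y)) x :=
  (hρ.mul (hq.pow 2)).div (hp.const_mul γ) h₀

theorem hasDerivAt_downstreamPressure {p' θ' : 𝕜} (hγ : γ + 1 ≠ 0)
    (hM : machSq γ (p x) (ρ x) (q x) ≠ 0) (hp : HasDerivAt p p' x)
    (hθ : HasDerivAt (fun y => 1 / machSq γ (p y) (ρ y) (q y)) θ' x) :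
    HasDerivAt (fun y => downstreamPressure γ (p y) (ρ y) (q y))
      ((2 * γ * machSq γ (p x) (ρ x) (q x) - (γ - 1)) / (γ + 1) * p'
        - 2 * γ * p x * machSq γ (p x) (ρ x) (q x) ^ 2 / (γ + 1) * θ') x := by
  have hM' : HasDerivAt (fun y => machSq γ (p y) (ρ y) (q y))
      (-(θ' * machSq γ (p x) (ρ x) (q x) ^ 2)) x := by
    simpa only [one_div, inv_inv, inv_pow, div_inv_eq_mul, neg_mul] using
      hθ.fun_inv (one_div_ne_zero hM)
  simp only [downstreamPressure_eq hγ]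
  refine ((((hM'.const_mul (2 * γ)).sub_const (γ - 1)).div_const (γ + 1)).mul hp).congr_deriv ?_
  ring

theorem stmt_0_general [NeZero (2 : 𝕜)] {a : 𝕜} (hp : HasDerivAt p (ρ x * a) x)
    (hM_diff : DifferentiableAt 𝕜 (fun y => machSq γ (p y) (ρ y) (q y)) x)
    (hM : machSq γ (p x) (ρ x) (q x) ≠ 0) (hq : downstreamSpeed γ (p x) (ρ x) (q x) ≠ 0) :
    deriv (fun y => downstreamPressure γ (p y) (ρ y) (q y)) x =
        downstreamDensity γ (p x) (ρ x) (q x) * a ↔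
      deriv (fun y => 1 / machSq γ (p y) (ρ y) (q y)) x =
        (γ - 1) / (4 * q x ^ 2) * a *
          ((γ + 1) ^ 2 / (γ - 1 + 2 / machSq γ (p x) (ρ x) (q x))
            - (γ - 1 + 2 / machSq γ (p x) (ρ x) (q x))) := by
  obtain ⟨⟨-, hq₀⟩, hγ₀, hp₀⟩ := machSq_ne_zero_iff.mp hM
  obtain ⟨-, hγ₂, -⟩ := (downstreamSpeed_ne_zero_iff hq₀).mp hq
  have h2 : (2 : 𝕜) ≠ 0 := two_ne_zero
  have hθ := ((differentiableAt_const (1 : 𝕜)).fun_div hM_diff hM).hasDerivAt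
  have coeff_ne_zero : -(2 * γ * p x * machSq γ (p x) (ρ x) (q x) ^ 2 / (γ + 1)) ≠ 0 := by
    simp [h2, hγ₀, hp₀, hM, hγ₂]
  rw [(hasDerivAt_downstreamPressure hγ₂ hM hp hθ).deriv, ← sub_eq_zero,
    downstream_momentum_residual hM hq, mul_eq_zero, or_iff_right coeff_ne_zero, sub_eq_zero]

end Calculus

/-- Lemma 2.2: assuming the upstream radial momentum equation
`∂_r p₋ = ρ₋ w₋² / r`, the downstream equation `∂_r p₊ = ρ₊ w₊² / r` holds
iff `1/M₋²` solves the ODE (2.24). -/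
theorem stmt_0 (γ r₀ μ2 : ℝ) (hγ : 1 < γ) (hr₀ : 0 < r₀)
    (hμ2 : μ2 = (γ - 1) / (γ + 1))
    (pm ρm qm wm c2m M2m pp qp ρp wp : ℝ → ℝ)
    (hpm_diff : ∀ r ∈ Set.Ioo (0:ℝ) r₀, DifferentiableAt ℝ pm r)
    (hρm_diff : ∀ r ∈ Set.Ioo (0:ℝ) r₀, DifferentiableAt ℝ ρm r)
    (hqm_diff : ∀ r ∈ Set.Ioo (0:ℝ) r₀, DifferentiableAt ℝ qm r)
    (hwm_diff : ∀ r ∈ Set.Ioo (0:ℝ) r₀, DifferentiableAt ℝ wm r)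
    (hpm_pos : ∀ r ∈ Set.Ioo (0:ℝ) r₀, 0 < pm r)
    (hρm_pos : ∀ r ∈ Set.Ioo (0:ℝ) r₀, 0 < ρm r)
    (hqm_pos : ∀ r ∈ Set.Ioo (0:ℝ) r₀, 0 < qm r)
    (hc2m : ∀ r, c2m r = γ * pm r / ρm r)
    (hM2m : ∀ r, M2m r = ρm r * (qm r) ^ 2 / (γ * pm r))
    (hpp : ∀ r, pp r = ((1 + μ2) * M2m r - μ2) * pm r)
    (hqp : ∀ r, qp r = μ2 * (qm r + (2 / (γ - 1)) * c2m r / qm r))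
    (hρp : ∀ r, ρp r = ρm r * qm r / qp r)
    (hwp : ∀ r, wp r = wm r)
    (hup : ∀ r ∈ Set.Ioo (0:ℝ) r₀, deriv pm r = ρm r * (wm r) ^ 2 / r) :
    (∀ r ∈ Set.Ioo (0:ℝ) r₀, deriv pp r = ρp r * (wp r) ^ 2 / r) ↔
      (∀ r ∈ Set.Ioo (0:ℝ) r₀,
        deriv (fun s => 1 / M2m s) r =
          (γ - 1) / (4 * (qm r) ^ 2) * ((wm r) ^ 2 / r) *
            ((γ + 1) ^ 2 / (γ - 1 + 2 / M2m r) - (γ - 1 + 2 / M2m r))) := by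
  obtain rfl := hμ2
  obtain rfl := funext hc2m
  obtain rfl := funext hM2m
  obtain rfl := funext hpp
  refine forall₂_congr fun r hr => ?_
  have hp := hpm_pos r hr
  have hρ := hρm_pos r hr
  have hq := hqm_pos r hr
  have hγ₀ : 0 < γ := one_pos.trans hγ
  have hpm : HasDerivAt pm (ρm r * (wm r ^ 2 / r)) r :=
    (hup r hr).trans (mul_div_assoc _ _ _) ▸ (hpm_diff r hr).hasDerivAt
  rw [hwp, hρp, hqp, mul_div_assoc]
  exact stmt_0_general hpm
    (differentiableAt_machSq (hpm_diff r hr) (hρm_diff r hr) (hqm_diff r hr) (mul_pos hγ₀ hp).ne')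
    (machSq_pos hγ₀ hp hρ hq).ne' (downstreamSpeed_pos hγ hp hρ hq).ne'
end

section
/- The function t satisfies t(0) = t₀, t is differentiable on (0,r₀), and for every r ∈ (0,r₀) it solves the ordinary differential equation ∂_r t(r) = ((γ−1)/(4 q(r)²)) · (w(r)²/r) · ( (γ+1)²/(γ−1+2t(r)) − (γ−1+2t(r)) ). (Solution formula in the proof of Lemma 2.3 of the paper.) -/
/-!
Put `u = (γ - 1 + 2 * t) / (γ + 1)` and let `F` be the integral in the exponent. The formula for
`t` says `1 - u ^ 2 = c * exp (-(γ - 1) * F)` with `u ≥ 0`, and differentiating it gives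
`u' = (γ - 1) / 2 * F' * (1 / u - u)`, which is the equation for `t` in the variable `u`.
Division by `u` is harmless: `c = 1 - a ^ 2` with `a = μ2 * T₀ > 0`, the value of `u` at `0`, and
`F ≥ 0`, so `u` never vanishes.
-/

open MeasureTheory Set

theorem continuousWithinAt_sq_div_sub {𝕜 : Type*} [NontriviallyNormedField 𝕜] {f : 𝕜 → 𝕜}
    {s : Set 𝕜} {a : 𝕜} (hf : DifferentiableWithinAt 𝕜 f s a) (ha : f a = 0) :
    ContinuousWithinAt (fun x ↦ f x ^ 2 / (x - a)) s a := by
  rw [← continuousWithinAt_sdiff_self]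
  have hslope := hasDerivWithinAt_iff_tendsto_slope.1 hf.hasDerivWithinAt
  have hcont := hf.continuousWithinAt.mono (sdiff_subset (t := {a}))
  have hprod := hslope.mul hcont
  rw [ha, mul_zero] at hprod
  -- The quotient at `a` is `0 / 0 = 0`, which happens to be the limit there.
  have hval : f a ^ 2 / (a - a) = 0 := by rw [sub_self, div_zero]
  rw [ContinuousWithinAt, hval]
  refine hprod.congr fun x ↦ ?_
  rw [slope_def_field, ha]
  ring

theorem continuousOn_sq_div_mul_sq {𝕜 : Type*} [NontriviallyNormedField 𝕜] {w q : 𝕜 → 𝕜}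
    {s : Set 𝕜} (hw : ContinuousOn w s) (hw_diff : DifferentiableWithinAt 𝕜 w s 0) (hw0 : w 0 = 0)
    (hq : ContinuousOn q s) (hq0 : ∀ x ∈ s, q x ≠ 0) :
    ContinuousOn (fun x ↦ w x ^ 2 / (x * q x ^ 2)) s := by
  have hquot : ContinuousOn (fun x ↦ w x ^ 2 / x) s := by
    intro x hx
    rcases eq_or_ne x 0 with rfl | hx0
    · simpa only [sub_zero] using continuousWithinAt_sq_div_sub hw_diff hw0
    · exact ((hw x hx).pow 2).div continuousWithinAt_id hx0
  simp only [← div_div]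
  exact hquot.div (hq.pow 2) fun x hx ↦ pow_ne_zero 2 (hq0 x hx)

theorem hasDerivAt_integral_of_continuousOn_Ioo {E : Type*} [NormedAddCommGroup E]
    [NormedSpace ℝ E] [CompleteSpace E] {f : ℝ → E} {a b r : ℝ}
    (hint : IntervalIntegrable f volume a b) (hf : ContinuousOn f (Ioo a b)) (hr : r ∈ Ioo a b) :
    HasDerivAt (fun x ↦ ∫ τ in a..x, f τ) (f r) r :=
  intervalIntegral.integral_hasDerivAt_right
    (hint.mono_set (uIcc_subset_uIcc_left (Icc_subset_uIcc (Ioo_subset_Icc_self hr))))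
    (hf.stronglyMeasurableAtFilter isOpen_Ioo r hr) (hf.continuousAt (isOpen_Ioo.mem_nhds hr))

theorem one_sub_mul_exp_neg_pos {a x : ℝ} (ha : a ≠ 0) (hx : 0 ≤ x) :
    0 < 1 - (1 - a ^ 2) * Real.exp (-x) := by
  have hexp : Real.exp (-x) ≤ 1 := Real.exp_le_one_iff.2 (neg_nonpos.2 hx)
  calc
    0 < (1 - Real.exp (-x)) + a ^ 2 * Real.exp (-x) :=
      add_pos_of_nonneg_of_pos (sub_nonneg.2 hexp) (by positivity)
    _ = 1 - (1 - a ^ 2) * Real.exp (-x) := by ring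

theorem hasDerivAt_sqrt_one_sub_mul_exp {F u : ℝ → ℝ} {c k F' r : ℝ}
    (hu : ∀ x, u x = √(1 - c * Real.exp (-k * F x))) (hF : HasDerivAt F F' r)
    (hpos : 0 < 1 - c * Real.exp (-k * F r)) :
    HasDerivAt u (k / 2 * F' * (1 / u r - u r)) r := by
  have hur : 0 < u r := hu r ▸ Real.sqrt_pos.2 hpos
  have hexp : c * Real.exp (-k * F r) = 1 - u r ^ 2 := by
    rw [hu, Real.sq_sqrt hpos.le]
    ring
  have hderiv := (((hF.const_mul (-k)).exp.const_mul c).const_sub 1).sqrt hpos.ne'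
  rw [← funext hu, ← hu r, ← mul_assoc, hexp] at hderiv
  refine hderiv.congr_deriv ?_
  field_simp

theorem hasDerivAt_of_add_two_mul_eq {t u : ℝ → ℝ} {a b K r : ℝ}
    (htu : ∀ x, b + 2 * t x = a * u x) (hu : HasDerivAt u (K * (1 / u r - u r)) r) :
    HasDerivAt t (K / 2 * (a ^ 2 / (b + 2 * t r) - (b + 2 * t r))) r := by
  have ht : t = fun x ↦ (a * u x - b) / 2 := funext fun x ↦ by linarith [htu x]
  have hderiv := ((hu.const_mul a).sub_const b).div_const 2
  rw [← ht] at hderiv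
  refine hderiv.congr_deriv ?_
  rw [htu]
  field_simp

theorem stmt_1_general (γ r₀ t₀ μ2 T₀ : ℝ) (hγ : 1 < γ) (ht₀ : 0 < γ - 1 + 2 * t₀)
    (hμ2 : μ2 = (γ - 1) / (γ + 1)) (hT₀ : T₀ = 1 + 2 * t₀ / (γ - 1))
    (w q t : ℝ → ℝ) (hw : ContinuousOn w (Ioo 0 r₀)) (hq : ContinuousOn q (Ioo 0 r₀))
    (hq0 : ∀ r ∈ Ioo 0 r₀, q r ≠ 0)
    (hint : IntervalIntegrable (fun τ ↦ w τ ^ 2 / (τ * q τ ^ 2)) volume 0 r₀)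
    (ht : ∀ r, t r = (γ + 1) / 2 * (√(1 - (1 - μ2 ^ 2 * T₀ ^ 2) *
      Real.exp (-(γ - 1) * ∫ τ in (0 : ℝ)..r, w τ ^ 2 / (τ * q τ ^ 2))) - μ2)) :
    t 0 = t₀ ∧ ∀ r ∈ Ioo 0 r₀, HasDerivAt t ((γ - 1) / (4 * q r ^ 2) * (w r ^ 2 / r) *
      ((γ + 1) ^ 2 / (γ - 1 + 2 * t r) - (γ - 1 + 2 * t r))) r := by
  have hγ_sub : 0 < γ - 1 := by linarith
  have hγ_add : 0 < γ + 1 := by linarith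
  have ha : μ2 * T₀ = (γ - 1 + 2 * t₀) / (γ + 1) := by
    rw [hμ2, hT₀]
    field_simp
  have ha_pos : 0 < μ2 * T₀ := ha ▸ div_pos ht₀ hγ_add
  set F : ℝ → ℝ := fun x ↦ ∫ τ in (0 : ℝ)..x, w τ ^ 2 / (τ * q τ ^ 2) with hF_def
  obtain ⟨u, hu⟩ : ∃ u : ℝ → ℝ,
      ∀ x, u x = √(1 - (1 - (μ2 * T₀) ^ 2) * Real.exp (-(γ - 1) * F x)) := ⟨_, fun _ ↦ rfl⟩
  have htu (x : ℝ) : γ - 1 + 2 * t x = (γ + 1) * u x := by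
    rw [ht, ← mul_pow, ← hu, hμ2]
    field_simp
    ring
  refine ⟨?_, fun r hr ↦ ?_⟩
  · have hu_zero : u 0 = μ2 * T₀ := by
      simp only [hu, hF_def, intervalIntegral.integral_same, mul_zero, Real.exp_zero, mul_one,
        sub_sub_cancel, Real.sqrt_sq ha_pos.le]
    have hinit : γ - 1 + 2 * t 0 = γ - 1 + 2 * t₀ := by
      rw [htu, hu_zero, ha, mul_div_cancel₀ _ hγ_add.ne']
    linarith
  · have hF : HasDerivAt F (w r ^ 2 / (r * q r ^ 2)) r :=
      hasDerivAt_integral_of_continuousOn_Ioo hint ((hw.pow 2).div (continuousOn_id.mul (hq.pow 2))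
        fun x hx ↦ mul_ne_zero hx.1.ne' (pow_ne_zero 2 (hq0 x hx))) hr
    have hF_nonneg : 0 ≤ F r := intervalIntegral.integral_nonneg hr.1.le fun x hx ↦
      div_nonneg (sq_nonneg _) (mul_nonneg hx.1 (sq_nonneg _))
    have hpos : 0 < 1 - (1 - (μ2 * T₀) ^ 2) * Real.exp (-(γ - 1) * F r) := by
      rw [neg_mul]
      exact one_sub_mul_exp_neg_pos ha_pos.ne' (mul_nonneg hγ_sub.le hF_nonneg)
    have hode := hasDerivAt_of_add_two_mul_eq htu (hasDerivAt_sqrt_one_sub_mul_exp hu hF hpos)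
    refine hode.congr_deriv ?_
    congr 1
    field_simp
    ring

/-- Solution formula in the proof of Lemma 2.3: the explicit function `t`
satisfies `t 0 = t₀` and solves the ODE for `1/M₋²` on `(0, r₀)`. -/
theorem stmt_1 (γ r₀ t₀ μ2 T₀ : ℝ) (hγ : 1 < γ) (hr₀ : 0 < r₀)
    (ht₀ : t₀ ∈ Set.Ioo (0:ℝ) 1)
    (hμ2 : μ2 = (γ - 1) / (γ + 1)) (hT₀ : T₀ = 1 + 2 * t₀ / (γ - 1))
    (w q t : ℝ → ℝ)
    (hw : ContDiffOn ℝ 1 w (Set.Icc 0 r₀))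
    (hq : ContDiffOn ℝ 1 q (Set.Icc 0 r₀))
    (hw0 : w 0 = 0)
    (hqpos : ∀ r ∈ Set.Icc (0:ℝ) r₀, 0 < q r)
    (ht : ∀ r, t r = ((γ + 1) / 2) *
      (Real.sqrt (1 - (1 - μ2 ^ 2 * T₀ ^ 2) *
        Real.exp (-(γ - 1) * ∫ τ in (0:ℝ)..r, (w τ) ^ 2 / (τ * (q τ) ^ 2))) - μ2)) :
    t 0 = t₀ ∧
    (∀ r ∈ Set.Ioo (0:ℝ) r₀, DifferentiableAt ℝ t r) ∧
    (∀ r ∈ Set.Ioo (0:ℝ) r₀,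
      deriv t r = (γ - 1) / (4 * (q r) ^ 2) * ((w r) ^ 2 / r) *
        ((γ + 1) ^ 2 / (γ - 1 + 2 * t r) - (γ - 1 + 2 * t r))) := by
  have hmem0 : (0 : ℝ) ∈ Icc 0 r₀ := left_mem_Icc.2 hr₀.le
  have hcont := continuousOn_sq_div_mul_sq hw.continuousOn
    (hw.differentiableOn one_ne_zero 0 hmem0) hw0 hq.continuousOn fun r hr ↦ (hqpos r hr).ne'
  obtain ⟨hinit, hode⟩ := stmt_1_general γ r₀ t₀ μ2 T₀ hγ (by linarith [ht₀.1]) hμ2 hT₀ w q t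
    (hw.continuousOn.mono Ioo_subset_Icc_self) (hq.continuousOn.mono Ioo_subset_Icc_self)
    (fun r hr ↦ (hqpos r (Ioo_subset_Icc_self hr)).ne')
    (hcont.intervalIntegrable_of_Icc hr₀.le) ht
  exact ⟨hinit, fun r hr ↦ (hode r hr).differentiableAt, fun r hr ↦ (hode r hr).deriv⟩
end

section
/- Assume ∂_r p(r) = ρ(r) w(r)²/r for all r ∈ (0,r₀). Then the equation ∂_r ( γp/(ρq²) )(r) = ((γ−1)/(4q(r)²)) · (w(r)²/r) · ( (γ+1)²/(γ−1 + 2γp/(ρq²)) − (γ−1 + 2γp/(ρq²)) ) holds on (0,r₀) if and only if the equation ∂_r (1/q²)(r) = (1/q(r)²) · [ ((γ−1)²/4) · (w(r)²/r) · (ρ/(γp)) · ( (γ+1)²/( (γ−1)² (1 + (2γp)/((γ−1)ρq²)) ) − (1 + (2γp)/((γ−1)ρq²)) ) − (ρ/(γp)) · ∂_r(γp/ρ)(r) ] holds on (0,r₀). (Lemma 2.4 of the paper.) -/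
/-!
Write `c = γp/ρ` and `u = 1/q²`. The first equation prescribes the logarithmic derivative of the
product `c u`, the second one that of `u`. Since `(c u)'/(c u) = c'/c + u'/u`, they are equivalent
as soon as the two prescribed values differ by `c'/c`, which is an algebraic identity.
-/

section LogDeriv

variable {𝕜 𝕜' : Type*} [NontriviallyNormedField 𝕜] [NontriviallyNormedField 𝕜']
  [NormedAlgebra 𝕜 𝕜'] {a b : 𝕜 → 𝕜'} {x : 𝕜}

theorem deriv_mul_eq_mul_deriv_add_logDeriv (ha : DifferentiableAt 𝕜 a x)
    (hb : DifferentiableAt 𝕜 b x) (hax : a x ≠ 0) :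
    deriv (fun y => a y * b y) x = a x * (deriv b x + b x * logDeriv a x) := by
  rw [deriv_fun_mul ha hb, logDeriv_apply]
  field_simp
  ring

theorem deriv_mul_eq_mul_iff_deriv_eq_mul_sub_logDeriv (ha : DifferentiableAt 𝕜 a x)
    (hb : DifferentiableAt 𝕜 b x) (hax : a x ≠ 0) (k : 𝕜') :
    deriv (fun y => a y * b y) x = a x * b x * k ↔ deriv b x = b x * (k - logDeriv a x) := by
  rw [deriv_mul_eq_mul_deriv_add_logDeriv ha hb hax, mul_assoc, mul_right_inj' hax, mul_sub,
    eq_sub_iff_add_eq]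

end LogDeriv

section Field

variable {K : Type*} [Field K] {g : K}

theorem add_div_eq_mul_one_add_div_mul (hg : g ≠ 0) (a b : K) :
    g + a / b = g * (1 + a / (g * b)) := by
  rw [mul_add, mul_one, ← mul_div_assoc, mul_div_mul_left a b hg]

theorem div_mul_sub_mul_eq_mul_div_sq_mul_sub (hg : g ≠ 0) (k y : K) :
    k / (g * y) - g * y = g * (k / (g ^ 2 * y) - y) := by
  rw [mul_sub, ← mul_div_assoc, pow_two, mul_assoc g g y, mul_div_mul_left k (g * y) hg]

end Field

theorem stmt_3_general {𝕜 : Type*} [NontriviallyNormedField 𝕜] [CharZero 𝕜]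
    {γ W r : 𝕜} {p ρ q : 𝕜 → 𝕜}
    (hγ₀ : γ ≠ 0) (hγ₁ : γ - 1 ≠ 0)
    (hp_diff : DifferentiableAt 𝕜 p r) (hρ_diff : DifferentiableAt 𝕜 ρ r)
    (hq_diff : DifferentiableAt 𝕜 q r)
    (hp : p r ≠ 0) (hρ : ρ r ≠ 0) (hq : q r ≠ 0)
    (_hden : γ - 1 + 2 * γ * p r / (ρ r * q r ^ 2) ≠ 0) :
    deriv (fun s => γ * p s / (ρ s * q s ^ 2)) r =
        (γ - 1) / (4 * q r ^ 2) * W *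
          ((γ + 1) ^ 2 / (γ - 1 + 2 * γ * p r / (ρ r * q r ^ 2)) -
            (γ - 1 + 2 * γ * p r / (ρ r * q r ^ 2))) ↔
      deriv (fun s => 1 / q s ^ 2) r =
        1 / q r ^ 2 *
          ((γ - 1) ^ 2 / 4 * W * (ρ r / (γ * p r)) *
            ((γ + 1) ^ 2 / ((γ - 1) ^ 2 * (1 + 2 * γ * p r / ((γ - 1) * ρ r * q r ^ 2))) -
              (1 + 2 * γ * p r / ((γ - 1) * ρ r * q r ^ 2)))
            - ρ r / (γ * p r) * deriv (fun s => γ * p s / ρ s) r) := by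
  have hc_diff : DifferentiableAt 𝕜 (fun s => γ * p s / ρ s) r :=
    (hp_diff.const_mul γ).fun_div hρ_diff hρ
  have hu_diff : DifferentiableAt 𝕜 (fun s => 1 / q s ^ 2) r :=
    (differentiableAt_const 1).fun_div (hq_diff.fun_pow 2) (pow_ne_zero 2 hq)
  have hc : γ * p r / ρ r ≠ 0 := div_ne_zero (mul_ne_zero hγ₀ hp) hρ
  have h_factor : (fun s => γ * p s / (ρ s * q s ^ 2)) =
      fun s => γ * p s / ρ s * (1 / q s ^ 2) := by
    simp only [div_mul_div_comm, mul_one]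
  have h_logDeriv : ρ r / (γ * p r) * deriv (fun s => γ * p s / ρ s) r =
      logDeriv (fun s => γ * p s / ρ s) r := by
    rw [logDeriv_apply, div_eq_inv_mul (deriv _ _), inv_div]
  have h_rhs (B : 𝕜) : (γ - 1) / (4 * q r ^ 2) * W * ((γ - 1) * B) =
      γ * p r / ρ r * (1 / q r ^ 2) * ((γ - 1) ^ 2 / 4 * W * (ρ r / (γ * p r)) * B) := by
    field_simp
  rw [h_factor, h_logDeriv, add_div_eq_mul_one_add_div_mul hγ₁, ← mul_assoc (γ - 1) (ρ r),
    div_mul_sub_mul_eq_mul_div_sq_mul_sub hγ₁, h_rhs,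
    deriv_mul_eq_mul_iff_deriv_eq_mul_sub_logDeriv hc_diff hu_diff hc]

/-- Lemma 2.4: assuming `∂_r p = ρ w² / r`, the ODE for `γp/(ρq²)` is
equivalent to the ODE for `1/q²`. -/
theorem stmt_3 (γ r₀ : ℝ) (hγ : 1 < γ) (hr₀ : 0 < r₀)
    (p ρ q w : ℝ → ℝ)
    (hp_diff : ∀ r ∈ Set.Ioo (0:ℝ) r₀, DifferentiableAt ℝ p r)
    (hρ_diff : ∀ r ∈ Set.Ioo (0:ℝ) r₀, DifferentiableAt ℝ ρ r)
    (hq_diff : ∀ r ∈ Set.Ioo (0:ℝ) r₀, DifferentiableAt ℝ q r)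
    (hw_diff : ∀ r ∈ Set.Ioo (0:ℝ) r₀, DifferentiableAt ℝ w r)
    (hp_pos : ∀ r ∈ Set.Ioo (0:ℝ) r₀, 0 < p r)
    (hρ_pos : ∀ r ∈ Set.Ioo (0:ℝ) r₀, 0 < ρ r)
    (hq_pos : ∀ r ∈ Set.Ioo (0:ℝ) r₀, 0 < q r)
    (hup : ∀ r ∈ Set.Ioo (0:ℝ) r₀, deriv p r = ρ r * (w r) ^ 2 / r) :
    (∀ r ∈ Set.Ioo (0:ℝ) r₀,
      deriv (fun s => γ * p s / (ρ s * (q s) ^ 2)) r =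
        (γ - 1) / (4 * (q r) ^ 2) * ((w r) ^ 2 / r) *
          ((γ + 1) ^ 2 / (γ - 1 + 2 * γ * p r / (ρ r * (q r) ^ 2)) -
            (γ - 1 + 2 * γ * p r / (ρ r * (q r) ^ 2)))) ↔
    (∀ r ∈ Set.Ioo (0:ℝ) r₀,
      deriv (fun s => 1 / (q s) ^ 2) r =
        (1 / (q r) ^ 2) *
          ((γ - 1) ^ 2 / 4 * ((w r) ^ 2 / r) * (ρ r / (γ * p r)) *
            ((γ + 1) ^ 2 /
                ((γ - 1) ^ 2 * (1 + (2 * γ * p r) / ((γ - 1) * ρ r * (q r) ^ 2))) -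
              (1 + (2 * γ * p r) / ((γ - 1) * ρ r * (q r) ^ 2)))
            - (ρ r / (γ * p r)) * deriv (fun s => γ * p s / ρ s) r)) := by
  refine forall₂_congr fun r hr => ?_
  have hp := hp_pos r hr
  have hρ := hρ_pos r hr
  have hq := hq_pos r hr
  have hγ₀ : 0 < γ := one_pos.trans hγ
  have hγ₁ : 0 < γ - 1 := sub_pos.2 hγ
  exact stmt_3_general (W := w r ^ 2 / r) hγ₀.ne' hγ₁.ne' (hp_diff r hr) (hρ_diff r hr)
    (hq_diff r hr) hp.ne' hρ.ne' hq.ne' (by positivity)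
end

section
/- The function Y satisfies Y(0) = Y₀, Y is differentiable on (0,r₀) with ∂_r Y(r) = ((γ−1)/2) · (w(r)²/r) · (1 − μ⁴Y(r)²)/(μ⁴ Y(r)), Y is monotonically nondecreasing, and 1 < Y₀ ≤ Y(r) < (γ+1)/(γ−1) for all r ∈ [0,r₀]. (Solution formula and bounds in the proof of Lemma 2.5 of the paper.) -/
/-!
Put `m = μ²`, `k = γ - 1` and use `t = ∫₀^r w²/τ` as the time variable. The equation for `Y` becomes
the autonomous equation `y' = (k / 2) (1 - m² y²) / (m² y)`, under which `1 - m² y²` is a multiple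
of `exp (-k t)`. Hence `y` increases towards its equilibrium `1 / m = (γ + 1) / (γ - 1)` without
reaching it. As `w² / τ ≥ 0`, the change of time is nondecreasing, and these properties pass to `Y`.
-/

open MeasureTheory Set

section Primitive

variable {a b : ℝ}

theorem hasDerivWithinAt_integral_right_of_continuousOn {E : Type*} [NormedAddCommGroup E]
    [NormedSpace ℝ E] [CompleteSpace E] {f : ℝ → E} (hf : ContinuousOn f (Icc a b)) {x : ℝ}
    (hx : x ∈ Icc a b) :
    HasDerivWithinAt (fun u ↦ ∫ τ in a..u, f τ) (f x) (Icc a b) x := by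
  have : Fact (x ∈ Icc a b) := ⟨hx⟩
  have hfx : IntervalIntegrable f volume a x :=
    (hf.mono (Icc_subset_Icc_right hx.2)).intervalIntegrable_of_Icc hx.1
  exact intervalIntegral.integral_hasDerivWithinAt_right hfx
    (hf.stronglyMeasurableAtFilter_nhdsWithin measurableSet_Icc x) (hf x hx)

theorem monotoneOn_integral_right_of_nonneg {μ : Measure ℝ} {f : ℝ → ℝ}
    (hf : IntegrableOn f (Ioc a b) μ) (hf₀ : ∀ x ∈ Ioc a b, 0 ≤ f x) :
    MonotoneOn (fun u ↦ ∫ τ in a..u, f τ ∂μ) (Icc a b) := by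
  intro x hx y hy hxy
  have hsub : Ioc a y ⊆ Ioc a b := Ioc_subset_Ioc_right hy.2
  refine intervalIntegral.integral_mono_interval le_rfl hx.1 hxy ?_ ?_
  · exact ae_restrict_of_forall_mem measurableSet_Ioc fun τ hτ ↦ hf₀ τ (hsub hτ)
  · exact (intervalIntegrable_iff_integrableOn_Ioc_of_le hy.1).2 (hf.mono_set hsub)

end Primitive

/-- The solution of the relaxation equation `y' = (k / 2) (1 - m² y²) / (m² y)` with `y(0) = y₀`,
as a function of time `t`; its equilibrium is `1 / m`. Where the radicand is negative, the value
is `0`. -/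
noncomputable def relaxationProfile (k m y₀ t : ℝ) : ℝ :=
  (1 / m) * √(1 - (1 - m ^ 2 * y₀ ^ 2) * Real.exp (-k * t))

namespace relaxationProfile

variable {k m y₀ t : ℝ}

theorem apply_zero (hm : 0 < m) (hy₀ : 0 ≤ y₀) : relaxationProfile k m y₀ 0 = y₀ := by
  have hrad : 1 - (1 - m ^ 2 * y₀ ^ 2) * Real.exp (-k * 0) = (m * y₀) ^ 2 := by
    rw [mul_zero, Real.exp_zero]
    ring
  rw [relaxationProfile, hrad, Real.sqrt_sq (mul_nonneg hm.le hy₀), one_div,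
    inv_mul_cancel_left₀ hm.ne']

theorem ne_zero_of_apply_ne_zero (h : relaxationProfile k m y₀ t ≠ 0) : m ≠ 0 := by
  rintro rfl
  exact h (by rw [relaxationProfile, div_zero, zero_mul])

theorem radicand_pos (h : relaxationProfile k m y₀ t ≠ 0) :
    0 < 1 - (1 - m ^ 2 * y₀ ^ 2) * Real.exp (-k * t) :=
  Real.sqrt_ne_zero'.1 (right_ne_zero_of_mul h)

theorem one_sub_sq_mul_sq (h : relaxationProfile k m y₀ t ≠ 0) :
    1 - m ^ 2 * relaxationProfile k m y₀ t ^ 2 =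
      (1 - m ^ 2 * y₀ ^ 2) * Real.exp (-k * t) := by
  have hm : m ≠ 0 := ne_zero_of_apply_ne_zero h
  rw [relaxationProfile, mul_pow, Real.sq_sqrt (radicand_pos h).le]
  field_simp
  ring

theorem hasDerivAt (h : relaxationProfile k m y₀ t ≠ 0) :
    HasDerivAt (relaxationProfile k m y₀)
      (k / 2 * (1 - m ^ 2 * relaxationProfile k m y₀ t ^ 2) /
        (m ^ 2 * relaxationProfile k m y₀ t)) t := by
  have hm : m ≠ 0 := ne_zero_of_apply_ne_zero h
  have hsqrt : √(1 - (1 - m ^ 2 * y₀ ^ 2) * Real.exp (-k * t)) ≠ 0 := right_ne_zero_of_mul h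
  have hexp : HasDerivAt (fun s ↦ Real.exp (-k * s)) (Real.exp (-k * t) * (-k * 1)) t :=
    ((hasDerivAt_id t).const_mul (-k)).exp
  have hderiv := (((hexp.const_mul (1 - m ^ 2 * y₀ ^ 2)).const_sub 1).sqrt
    (radicand_pos h).ne').const_mul (1 / m)
  refine hderiv.congr_deriv ?_
  rw [one_sub_sq_mul_sq h, relaxationProfile]
  field_simp [hsqrt]

theorem monotone (hk : 0 ≤ k) (hm : 0 ≤ m) (hy₀ : m ^ 2 * y₀ ^ 2 ≤ 1) :
    Monotone (relaxationProfile k m y₀) := by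
  intro s t hst
  have hexp : Real.exp (-k * t) ≤ Real.exp (-k * s) :=
    Real.exp_le_exp.2 (mul_le_mul_of_nonpos_left hst (neg_nonpos.2 hk))
  unfold relaxationProfile
  gcongr

theorem lt_one_div (hm : 0 < m) (hy₀ : m ^ 2 * y₀ ^ 2 < 1) :
    relaxationProfile k m y₀ t < 1 / m := by
  refine mul_lt_of_lt_one_right (one_div_pos.2 hm) ((Real.sqrt_lt' one_pos).2 ?_)
  rw [one_pow]
  exact sub_lt_self 1 (mul_pos (sub_pos.2 hy₀) (Real.exp_pos _))

end relaxationProfile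

theorem stmt_4_general {k m r₀ y₀ : ℝ} {W Y : ℝ → ℝ} (hk : 0 ≤ k) (hy₀ : y₀ ∈ Ioo 0 (1 / m))
    (hWcont : ContinuousOn W (Icc 0 r₀)) (hW₀ : ∀ τ ∈ Ioc 0 r₀, 0 ≤ W τ)
    (hY : ∀ r, Y r = (1 / m) * √(1 - (1 - m ^ 2 * y₀ ^ 2) *
      Real.exp (-k * ∫ τ in (0 : ℝ)..r, W τ))) :
    Y 0 = y₀ ∧
    (∀ r ∈ Icc 0 r₀, HasDerivWithinAt Y
      (k / 2 * W r * (1 - m ^ 2 * Y r ^ 2) / (m ^ 2 * Y r)) (Icc 0 r₀) r) ∧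
    MonotoneOn Y (Icc 0 r₀) ∧
    ∀ r ∈ Icc 0 r₀, y₀ ≤ Y r ∧ Y r < 1 / m := by
  obtain rfl : Y = fun r ↦ relaxationProfile k m y₀ (∫ τ in (0 : ℝ)..r, W τ) := funext hY
  have hm : 0 < m := one_div_pos.1 (hy₀.1.trans hy₀.2)
  have hlt : m ^ 2 * y₀ ^ 2 < 1 := by
    rw [← mul_pow]
    exact pow_lt_one₀ (mul_pos hm hy₀.1).le ((lt_div_iff₀' hm).1 hy₀.2) two_ne_zero
  have hinit : relaxationProfile k m y₀ (∫ τ in (0 : ℝ)..0, W τ) = y₀ := by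
    rw [intervalIntegral.integral_same, relaxationProfile.apply_zero hm hy₀.1.le]
  have hWint : IntegrableOn W (Ioc 0 r₀) := hWcont.integrableOn_Icc.mono_set Ioc_subset_Icc_self
  have hmono := (relaxationProfile.monotone (y₀ := y₀) hk hm.le hlt.le).comp_monotoneOn
    (monotoneOn_integral_right_of_nonneg hWint hW₀)
  have hle : ∀ r ∈ Icc 0 r₀, y₀ ≤ relaxationProfile k m y₀ (∫ τ in (0 : ℝ)..r, W τ) :=
    fun r hr ↦ hinit.ge.trans (hmono (left_mem_Icc.2 (hr.1.trans hr.2)) hr hr.1)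
  refine ⟨hinit, fun r hr ↦ ?_, hmono, fun r hr ↦ ⟨hle r hr, relaxationProfile.lt_one_div hm hlt⟩⟩
  have hprofile := relaxationProfile.hasDerivAt (hy₀.1.trans_le (hle r hr)).ne'
  have htime := hasDerivWithinAt_integral_right_of_continuousOn hWcont hr
  have hchain := hprofile.comp_hasDerivWithinAt r htime
  exact hchain.congr_deriv (by ring)

/-- Solution formula and bounds in the proof of Lemma 2.5: `Y 0 = Y₀`, `Y`
solves the ODE `∂_r Y = ((γ-1)/2)(w²/r)(1-μ⁴Y²)/(μ⁴Y)`, is monotone, and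
`1 < Y₀ ≤ Y r < (γ+1)/(γ-1)`. -/
theorem stmt_4 (γ r₀ Y₀ μ2 : ℝ) (hγ : 1 < γ) (hr₀ : 0 < r₀)
    (hμ2 : μ2 = (γ - 1) / (γ + 1))
    (hY₀ : Y₀ ∈ Set.Ioo 1 ((γ + 1) / (γ - 1)))
    (w W Y : ℝ → ℝ)
    (hWcont : ContinuousOn W (Set.Icc 0 r₀))
    (hWeq : ∀ τ ∈ Set.Ioc (0:ℝ) r₀, W τ = (w τ) ^ 2 / τ)
    (hY : ∀ r, Y r = (1 / μ2) * Real.sqrt (1 - (1 - μ2 ^ 2 * Y₀ ^ 2) *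
      Real.exp (-(γ - 1) * ∫ τ in (0:ℝ)..r, W τ))) :
    Y 0 = Y₀ ∧
    (∀ r ∈ Set.Ioo (0:ℝ) r₀, DifferentiableAt ℝ Y r) ∧
    (∀ r ∈ Set.Ioo (0:ℝ) r₀,
      deriv Y r = ((γ - 1) / 2) * ((w r) ^ 2 / r) *
        (1 - μ2 ^ 2 * (Y r) ^ 2) / (μ2 ^ 2 * Y r)) ∧
    MonotoneOn Y (Set.Icc 0 r₀) ∧
    ∀ r ∈ Set.Icc (0:ℝ) r₀, 1 < Y₀ ∧ Y₀ ≤ Y r ∧ Y r < (γ + 1) / (γ - 1) := by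
  have hinv : (γ + 1) / (γ - 1) = 1 / μ2 := by rw [hμ2, one_div_div]
  have hW₀ : ∀ τ ∈ Ioc 0 r₀, 0 ≤ W τ := fun τ hτ ↦
    hWeq τ hτ ▸ div_nonneg (sq_nonneg _) hτ.1.le
  rw [hinv] at hY₀ ⊢
  obtain ⟨hinit, hODE, hmono, hbounds⟩ := stmt_4_general (sub_pos.2 hγ).le
    ⟨one_pos.trans hY₀.1, hY₀.2⟩ hWcont hW₀ hY
  have hderiv : ∀ r ∈ Ioo 0 r₀, HasDerivAt Y (((γ - 1) / 2) * (w r ^ 2 / r) *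
      (1 - μ2 ^ 2 * Y r ^ 2) / (μ2 ^ 2 * Y r)) r := fun r hr ↦
    hWeq r (Ioo_subset_Ioc_self hr) ▸
      (hODE r (Ioo_subset_Icc_self hr)).hasDerivAt (Icc_mem_nhds hr.1 hr.2)
  exact ⟨hinit, fun r hr ↦ (hderiv r hr).differentiableAt, fun r hr ↦ (hderiv r hr).deriv,
    hmono, fun r hr ↦ ⟨hY₀.1, hbounds r hr⟩⟩
end

section
/- Let δ > 0 and let w : [0,δ) → ℝ be five times continuously differentiable with w(0) = 0. Then the fourth derivative of the function r ↦ w(r)²/r on (0,δ) converges as r → 0⁺, and lim_{r→0⁺} (d/dr)⁴ ( w(r)²/r ) = 2 w'(0) w⁽⁴⁾(0) + 4 w''(0) w'''(0), which equals (1/5) times the fifth derivative of w² at 0. (Equation (3.52) in the proof of Lemma 3.1 of the paper; in particular the limit is 0 when w''(0) = w⁽⁴⁾(0) = 0.) -/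
/-!
Write `g = slope f a`. Leibniz' rule for `(x - a) • g x = f x - f a` gives
`(x - a) • g⁽ⁿ⁺¹⁾ + (n + 1) • g⁽ⁿ⁾ = f⁽ⁿ⁺¹⁾`, that is,
`((x - a)ⁿ⁺¹ • g⁽ⁿ⁾)' = (x - a)ⁿ • f⁽ⁿ⁺¹⁾`, so l'Hôpital's rule yields
`g⁽ⁿ⁾ → f⁽ⁿ⁺¹⁾(a) / (n + 1)` as `x → a⁺`. For `f = w²`, `a = 0`, `n = 4`, the derivative `f⁽⁵⁾(0)`
is expanded by Leibniz' rule once more.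
-/

open Filter Set Topology

section Slope

variable {𝕜 E : Type*} [NontriviallyNormedField 𝕜] [NormedAddCommGroup E] [NormedSpace 𝕜 E]
  {f g : 𝕜 → E} {a x : 𝕜} {n : ℕ}

theorem hasDerivAt_iteratedDeriv (hg : ContDiffAt 𝕜 (n + 1) g x) :
    HasDerivAt (iteratedDeriv n g) (iteratedDeriv (n + 1) g x) x := by
  rw [iteratedDeriv_succ]
  refine DifferentiableAt.hasDerivAt ?_
  simpa only [iteratedDerivWithin_univ, differentiableWithinAt_univ] using
    hg.contDiffWithinAt.differentiableWithinAt_iteratedDerivWithin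
      (s := univ) (m := n) (mod_cast n.lt_succ_self) (by simp)

theorem iteratedDeriv_succ_sub_smul (hg : ContDiffAt 𝕜 (n + 1) g x) :
    iteratedDeriv (n + 1) (fun y ↦ (y - a) • g y) x =
      (x - a) • iteratedDeriv (n + 1) g x + (n + 1) • iteratedDeriv n g x := by
  have sub_deriv_vanishes (i : ℕ) : iteratedDeriv (i + 2) (fun y : 𝕜 ↦ y - a) x = 0 := by
    simp [iteratedDeriv_succ', iteratedDeriv_const]
  have leibniz := iteratedDerivWithin_smul (n := n + 1) (f := fun y ↦ y - a) (mem_univ x)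
    uniqueDiffOn_univ (contDiffAt_id.sub contDiffAt_const) (mod_cast hg)
  simp only [iteratedDerivWithin_univ] at leibniz
  refine leibniz.trans ?_
  rw [Finset.sum_range_succ', Finset.sum_range_succ']
  simp only [add_assoc, Nat.reduceAdd, sub_deriv_vanishes]
  simp [add_comm]

theorem contDiffAt_slope {m : WithTop ℕ∞} (hf : ContDiffAt 𝕜 m f x) (hx : x ≠ a) :
    ContDiffAt 𝕜 m (slope f a) x :=
  ((contDiffAt_id.sub contDiffAt_const).inv (sub_ne_zero.2 hx)).smul (hf.sub contDiffAt_const)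

theorem sub_smul_iteratedDeriv_succ_slope (hf : ContDiffAt 𝕜 (n + 1) f x) (hx : x ≠ a) :
    (x - a) • iteratedDeriv (n + 1) (slope f a) x + (n + 1) • iteratedDeriv n (slope f a) x =
      iteratedDeriv (n + 1) f x := by
  have hmul : (fun y ↦ (y - a) • slope f a y) = fun y ↦ -f a + f y := by
    funext y
    rw [sub_smul_slope, vsub_eq_sub, sub_eq_neg_add]
  rw [← iteratedDeriv_succ_sub_smul (contDiffAt_slope hf hx), hmul,
    iteratedDeriv_const_add n.succ_pos]

theorem hasDerivAt_sub_pow_smul_iteratedDeriv_slope (hf : ContDiffAt 𝕜 (n + 1) f x) (hx : x ≠ a) :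
    HasDerivAt (fun y ↦ (y - a) ^ (n + 1) • iteratedDeriv n (slope f a) y)
      ((x - a) ^ n • iteratedDeriv (n + 1) f x) x := by
  have hslope := hasDerivAt_iteratedDeriv (contDiffAt_slope hf hx)
  refine ((((hasDerivAt_id x).sub_const a).pow (n + 1)).smul hslope).congr_deriv ?_
  rw [← sub_smul_iteratedDeriv_succ_slope hf hx, smul_add, smul_smul, ← pow_succ,
    ← Nat.cast_smul_eq_nsmul 𝕜 (n + 1), smul_smul]
  simp [mul_comm]

end Slope

section RightLimit

variable {E : Type*} [NormedAddCommGroup E] [NormedSpace ℝ E] {a b : ℝ} {n : ℕ}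

theorem tendsto_iteratedDeriv_nhdsGT {f : ℝ → E} (hab : a < b) (hf : ContDiffOn ℝ n f (Ico a b)) :
    Tendsto (iteratedDeriv n f) (𝓝[>] a) (𝓝 (iteratedDerivWithin n f (Ico a b) a)) := by
  have hcont : Tendsto (iteratedDerivWithin n f (Ico a b)) (𝓝[>] a)
      (𝓝 (iteratedDerivWithin n f (Ico a b) a)) := by
    rw [← nhdsWithin_Ioo_eq_nhdsGT hab]
    exact (hf.continuousOn_iteratedDerivWithin le_rfl (uniqueDiffOn_Ico a b) a
      (left_mem_Ico.2 hab)).mono_left (nhdsWithin_mono a Ioo_subset_Ico_self)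
  refine hcont.congr' ?_
  filter_upwards [Ioo_mem_nhdsGT hab] with x hx
  exact iteratedDerivWithin_eq_iteratedDeriv (uniqueDiffOn_Ico a b)
    (hf.contDiffAt (Ico_mem_nhds hx.1 hx.2)) (Ioo_subset_Ico_self hx)

theorem tendsto_sub_pow_nhdsGT (hn : n ≠ 0) :
    Tendsto (fun x : ℝ ↦ (x - a) ^ n) (𝓝[>] a) (𝓝 0) := by
  have hcont : Continuous fun x : ℝ ↦ (x - a) ^ n := by fun_prop
  simpa [hn] using (hcont.tendsto a).mono_left nhdsWithin_le_nhds

theorem tendsto_sub_pow_smul_iteratedDeriv_slope {f : ℝ → E} (hab : a < b)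
    (hf : ContDiffOn ℝ n f (Ico a b)) :
    Tendsto (fun x ↦ (x - a) ^ (n + 1) • iteratedDeriv n (slope f a) x) (𝓝[>] a) (𝓝 0) := by
  induction n with
  | zero =>
    have hf_lim := (tendsto_iteratedDeriv_nhdsGT hab hf).sub_const (f a)
    simpa [sub_smul_slope] using hf_lim
  | succ n ih =>
    have hpow : Tendsto (fun x : ℝ ↦ (x - a) ^ (n + 1)) (𝓝[>] a) (𝓝 0) :=
      tendsto_sub_pow_nhdsGT n.succ_ne_zero
    have hlim := (hpow.smul (tendsto_iteratedDeriv_nhdsGT hab hf)).sub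
      ((ih (hf.of_le (mod_cast n.le_succ))).const_smul (n + 1))
    simp only [zero_smul, smul_zero, sub_zero] at hlim
    refine hlim.congr' ?_
    filter_upwards [Ioo_mem_nhdsGT hab] with x hx
    rw [← sub_smul_iteratedDeriv_succ_slope
      (mod_cast hf.contDiffAt (Ico_mem_nhds hx.1 hx.2)) hx.1.ne', smul_add, smul_smul, ← pow_succ,
      smul_comm (n + 1), add_sub_cancel_right]

theorem tendsto_iteratedDeriv_slope_nhdsGT {f : ℝ → ℝ} (hab : a < b)
    (hf : ContDiffOn ℝ (n + 1) f (Ico a b)) :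
    Tendsto (iteratedDeriv n (slope f a)) (𝓝[>] a)
      (𝓝 (iteratedDerivWithin (n + 1) f (Ico a b) a / (n + 1))) := by
  have hquot : Tendsto (fun x ↦ (x - a) ^ (n + 1) • iteratedDeriv n (slope f a) x /
      (x - a) ^ (n + 1)) (𝓝[>] a) (𝓝 (iteratedDerivWithin (n + 1) f (Ico a b) a / (n + 1))) := by
    refine HasDerivAt.lhopital_zero_nhdsGT (f' := fun x ↦ (x - a) ^ n • iteratedDeriv (n + 1) f x)
      (g' := fun x ↦ (n + 1) * (x - a) ^ n) ?_ ?_ ?_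
      (tendsto_sub_pow_smul_iteratedDeriv_slope hab (hf.of_le (mod_cast n.le_succ)))
      (tendsto_sub_pow_nhdsGT n.succ_ne_zero) ?_
    · filter_upwards [Ioo_mem_nhdsGT hab] with x hx
      exact hasDerivAt_sub_pow_smul_iteratedDeriv_slope
        (hf.contDiffAt (Ico_mem_nhds hx.1 hx.2)) hx.1.ne'
    · filter_upwards with x
      simpa using ((hasDerivAt_id x).sub_const a).fun_pow (n + 1)
    · filter_upwards [self_mem_nhdsWithin] with x (hx : a < x)
      have : 0 < x - a := sub_pos.2 hx
      positivity
    · refine ((tendsto_iteratedDeriv_nhdsGT hab (mod_cast hf)).div_const _).congr' ?_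
      filter_upwards [self_mem_nhdsWithin] with x (hx : a < x)
      rw [smul_eq_mul, mul_comm, mul_div_mul_right _ _ (pow_ne_zero n (sub_pos.2 hx).ne')]
  refine hquot.congr' ?_
  filter_upwards [self_mem_nhdsWithin] with x (hx : a < x)
  exact mul_div_cancel_left₀ _ (pow_ne_zero _ (sub_pos.2 hx).ne')

end RightLimit

theorem iteratedDerivWithin_five_sq_of_eq_zero {𝕜 𝔸 : Type*}
    [NontriviallyNormedField 𝕜] [NormedCommRing 𝔸] [NormedAlgebra 𝕜 𝔸]
    {w : 𝕜 → 𝔸} {s : Set 𝕜} {x : 𝕜} (hs : UniqueDiffOn 𝕜 s) (hx : x ∈ s)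
    (hw : ContDiffWithinAt 𝕜 5 w s x) (hwx : w x = 0) :
    iteratedDerivWithin 5 (fun y ↦ w y ^ 2) s x =
      10 * derivWithin w s x * iteratedDerivWithin 4 w s x +
        20 * iteratedDerivWithin 2 w s x * iteratedDerivWithin 3 w s x := by
  have leibniz := iteratedDerivWithin_mul (n := 5) hx hs hw hw
  simp only [Finset.sum_range_succ, Finset.sum_range_zero] at leibniz
  simp only [sq]
  refine leibniz.trans ?_
  norm_num [Nat.choose, iteratedDerivWithin_one, hwx]
  ring

/-- Equation (3.52) in the proof of Lemma 3.1: for `w` a `C⁵` function on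
`[0,δ)` with `w 0 = 0`, the fourth derivative of `r ↦ w(r)²/r` tends to
`2w'(0)w⁽⁴⁾(0) + 4w''(0)w'''(0)` as `r → 0⁺`, which equals one fifth of the
fifth derivative of `w²` at `0`. -/
theorem stmt_10 (δ : ℝ) (hδ : 0 < δ) (w : ℝ → ℝ)
    (hw : ContDiffOn ℝ 5 w (Set.Ico 0 δ)) (hw0 : w 0 = 0) :
    Filter.Tendsto (fun r => iteratedDeriv 4 (fun x => (w x) ^ 2 / x) r)
      (nhdsWithin 0 (Set.Ioi 0))
      (nhds (2 * derivWithin w (Set.Ico 0 δ) 0 *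
          iteratedDerivWithin 4 w (Set.Ico 0 δ) 0
        + 4 * iteratedDerivWithin 2 w (Set.Ico 0 δ) 0 *
          iteratedDerivWithin 3 w (Set.Ico 0 δ) 0)) ∧
    2 * derivWithin w (Set.Ico 0 δ) 0 * iteratedDerivWithin 4 w (Set.Ico 0 δ) 0
        + 4 * iteratedDerivWithin 2 w (Set.Ico 0 δ) 0 *
          iteratedDerivWithin 3 w (Set.Ico 0 δ) 0
      = (1 / 5) * iteratedDerivWithin 5 (fun x => (w x) ^ 2) (Set.Ico 0 δ) 0 := by
  have hsq : ContDiffOn ℝ 5 (fun x ↦ w x ^ 2) (Ico 0 δ) := hw.pow 2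
  have hslope : (fun x ↦ w x ^ 2 / x) = slope (fun x ↦ w x ^ 2) 0 := by
    funext x
    simp [slope_def_field, hw0]
  have hlimit := tendsto_iteratedDeriv_slope_nhdsGT (n := 4) hδ (mod_cast hsq)
  have hfive := iteratedDerivWithin_five_sq_of_eq_zero (uniqueDiffOn_Ico 0 δ) (left_mem_Ico.2 hδ)
    (hw 0 (left_mem_Ico.2 hδ)) hw0
  have hvalue : 2 * derivWithin w (Ico 0 δ) 0 * iteratedDerivWithin 4 w (Ico 0 δ) 0
      + 4 * iteratedDerivWithin 2 w (Ico 0 δ) 0 * iteratedDerivWithin 3 w (Ico 0 δ) 0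
      = (1 / 5) * iteratedDerivWithin 5 (fun x ↦ w x ^ 2) (Ico 0 δ) 0 := by
    rw [hfive]
    ring
  refine ⟨?_, hvalue⟩
  rw [hvalue, hslope]
  convert hlimit using 2
  norm_num
  ring
end

section
/- Let m be a natural number, δ > 0, and let H : [0,δ) → ℝ be m times continuously differentiable. Then the m-th derivative of the function G(r) = (1/r²) ∫₀^r τ H(τ) dτ on (0,δ) converges as r → 0⁺, and lim_{r→0⁺} G^{(m)}(r) = H^{(m)}(0)/(m+2). (The cases m = 1, 3, 5 are the limits (4.36)–(4.38) used in the proof of Theorem 2.7 of the paper to show that the initial data of the stream-function potential lies in H⁷.) -/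
/-!
For `Aₖ F x = x⁻⁽ᵏ⁺¹⁾ ∫₀ˣ τᵏ F τ dτ`, the product rule and an integration by parts give
`(Aₖ F)' = Aₖ₊₁ F'`, so that the `m`-th derivative of `A₁ H` is `Aₘ₊₁ H⁽ᵐ⁾`. Up to the factor
`k + 1`, `Aₖ` is an average over `[0, x]`, whence `Aₖ F x → F 0 / (k + 1)` as `x → 0⁺`.
-/

open Filter MeasureTheory Set Topology
open scoped Interval

section NormalizedMoment

variable {E : Type*} [NormedAddCommGroup E] [NormedSpace ℝ E] {k : ℕ} {F F' : ℝ → E} {x : ℝ}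

/-- The `k`-th moment of `F` on `[0, x]`, divided by `x ^ (k + 1)` so as to be invariant under
rescaling: for `x ≠ 0` it is `∫₀¹ sᵏ F (s x) ds`. The value at `x = 0` is the junk value `0`. -/
noncomputable def normalizedMoment (k : ℕ) (F : ℝ → E) (x : ℝ) : E :=
  (x ^ (k + 1))⁻¹ • ∫ t in (0 : ℝ)..x, t ^ k • F t

theorem intervalIntegrable_pow_smul {a b : ℝ} (k : ℕ) (hF : IntervalIntegrable F volume a b) :
    IntervalIntegrable (fun t => t ^ k • F t) volume a b :=
  hF.continuousOn_smul (continuous_pow k).continuousOn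

theorem normalizedMoment_const [CompleteSpace E] (k : ℕ) (c : E) (hx : x ≠ 0) :
    normalizedMoment k (fun _ => c) x = ((k : ℝ) + 1)⁻¹ • c := by
  rw [normalizedMoment, intervalIntegral.integral_smul_const, integral_pow, smul_smul]
  congr 1
  field_simp
  simp

theorem normalizedMoment_sub {G : ℝ → E} (hF : IntervalIntegrable F volume 0 x)
    (hG : IntervalIntegrable G volume 0 x) :
    normalizedMoment k (fun t => F t - G t) x =
      normalizedMoment k F x - normalizedMoment k G x := by
  simp only [normalizedMoment, smul_sub]
  rw [intervalIntegral.integral_sub (intervalIntegrable_pow_smul k hF)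
    (intervalIntegrable_pow_smul k hG), smul_sub]

theorem norm_normalizedMoment_le {C : ℝ} (hx : x ≠ 0) (hF : ∀ t ∈ Ι 0 x, ‖F t‖ ≤ C) :
    ‖normalizedMoment k F x‖ ≤ C := by
  have integrand_le : ∀ t ∈ Ι 0 x, ‖t ^ k • F t‖ ≤ |x| ^ k * C := fun t ht => by
    have ht_le : |t| ≤ |x| := by
      simpa using abs_sub_left_of_mem_uIcc (uIoc_subset_uIcc ht)
    rw [norm_smul, norm_pow, Real.norm_eq_abs]
    gcongr
    exact hF t ht
  calc ‖normalizedMoment k F x‖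
      = (|x| ^ (k + 1))⁻¹ * ‖∫ t in (0 : ℝ)..x, t ^ k • F t‖ := by
        rw [normalizedMoment, norm_smul, norm_inv, norm_pow, Real.norm_eq_abs]
    _ ≤ (|x| ^ (k + 1))⁻¹ * (|x| ^ k * C * |x - 0|) := by
        gcongr
        exact intervalIntegral.norm_integral_le_of_norm_le_const integrand_le
    _ = C := by
        rw [sub_zero]
        field_simp
        ring

theorem tendsto_normalizedMoment_nhdsGT_zero [CompleteSpace E] {c : E}
    (hF : Tendsto F (𝓝[>] 0) (𝓝 c)) (hint : ∀ᶠ x in 𝓝[>] 0, IntervalIntegrable F volume 0 x) :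
    Tendsto (normalizedMoment k F) (𝓝[>] 0) (𝓝 (((k : ℝ) + 1)⁻¹ • c)) := by
  refine Metric.tendsto_nhds.2 fun ε hε => ?_
  obtain ⟨b, hb, hball⟩ := mem_nhdsGT_iff_exists_Ioo_subset.1
    (Metric.tendsto_nhds.1 hF (ε / 2) (half_pos hε))
  filter_upwards [hint, Ioo_mem_nhdsGT hb] with x hFx hx
  have norm_sub_le : ∀ t ∈ Ι 0 x, ‖F t - c‖ ≤ ε / 2 := fun t ht => by
    rw [uIoc_of_le hx.1.le] at ht
    rw [← dist_eq_norm]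
    exact (hball ⟨ht.1, ht.2.trans_lt hx.2⟩).le
  calc dist (normalizedMoment k F x) (((k : ℝ) + 1)⁻¹ • c)
      = ‖normalizedMoment k (fun t => F t - c) x‖ := by
        rw [dist_eq_norm, normalizedMoment_sub hFx intervalIntegrable_const,
          normalizedMoment_const k c hx.1.ne']
    _ ≤ ε / 2 := norm_normalizedMoment_le hx.1.ne' norm_sub_le
    _ < ε := half_lt_self hε

theorem integral_pow_succ_smul_deriv [CompleteSpace E] {a b : ℝ} (hF : ContinuousOn F [[a, b]])
    (hFF' : ∀ t ∈ Ioo (min a b) (max a b), HasDerivAt F (F' t) t)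
    (hF' : IntervalIntegrable F' volume a b) :
    ∫ t in a..b, t ^ (k + 1) • F' t =
      b ^ (k + 1) • F b - a ^ (k + 1) • F a - ((k : ℝ) + 1) • ∫ t in a..b, t ^ k • F t := by
  rw [intervalIntegral.integral_smul_deriv_eq_deriv_smul_of_hasDerivAt (by fun_prop) hF
    (fun t _ => hasDerivAt_pow (k + 1) t) hFF'
    (Continuous.intervalIntegrable (by fun_prop) a b) hF']
  simp [mul_smul]

theorem hasDerivAt_integral_pow_smul [CompleteSpace E] (k : ℕ) {a : ℝ}
    (hF : IntervalIntegrable F volume a x) (hmeas : StronglyMeasurableAtFilter F (𝓝 x))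
    (hFx : ContinuousAt F x) :
    HasDerivAt (fun y => ∫ t in a..y, t ^ k • F t) (x ^ k • F x) x := by
  obtain ⟨s, hs, hFs⟩ := hmeas
  have hmeas_smul : StronglyMeasurableAtFilter (fun t => t ^ k • F t) (𝓝 x) :=
    ⟨s, hs, (continuous_pow k).aestronglyMeasurable.smul hFs⟩
  exact intervalIntegral.integral_hasDerivAt_right (intervalIntegrable_pow_smul k hF) hmeas_smul
    ((continuousAt_pow x k).smul hFx)

theorem hasDerivAt_normalizedMoment [CompleteSpace E] (hx : x ≠ 0) (hF : ContinuousOn F [[0, x]])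
    (hmeas : StronglyMeasurableAtFilter F (𝓝 x)) (hFx : ContinuousAt F x)
    (hFF' : ∀ t ∈ Ioo (min 0 x) (max 0 x), HasDerivAt F (F' t) t)
    (hF' : IntervalIntegrable F' volume 0 x) :
    HasDerivAt (normalizedMoment k F) (normalizedMoment (k + 1) F' x) x := by
  have hasDerivAt_inv_pow : HasDerivAt (fun y : ℝ => (y ^ (k + 1))⁻¹)
      (-(((k : ℝ) + 1) * (x ^ (k + 2))⁻¹)) x := by
    refine ((hasDerivAt_pow (k + 1) x).fun_inv (pow_ne_zero _ hx)).congr_deriv ?_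
    rw [Nat.cast_succ, Nat.add_sub_cancel]
    field_simp
    ring
  have product_rule :=
    hasDerivAt_inv_pow.smul (hasDerivAt_integral_pow_smul k hF.intervalIntegrable hmeas hFx)
  refine product_rule.congr_deriv ?_
  rw [normalizedMoment, integral_pow_succ_smul_deriv hF hFF' hF', zero_pow k.succ_ne_zero,
    zero_smul, sub_zero]
  match_scalars <;> field_simp
  ring

theorem hasDerivAt_iteratedDerivWithin {m : ℕ} {s : Set ℝ} (hF : ContDiffOn ℝ (m + 1) F s)
    (hunique : UniqueDiffOn ℝ s) (hs : s ∈ 𝓝 x) :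
    HasDerivAt (iteratedDerivWithin m F s) (iteratedDerivWithin (m + 1) F s x) x := by
  have hdiff : DifferentiableOn ℝ (iteratedDerivWithin m F s) s :=
    hF.differentiableOn_iteratedDerivWithin (mod_cast m.lt_succ_self) hunique
  rw [iteratedDerivWithin_succ]
  exact (hdiff x (mem_of_mem_nhds hs)).hasDerivWithinAt.hasDerivAt hs

theorem iteratedDeriv_normalizedMoment_eqOn [CompleteSpace E] {m : ℕ} {δ : ℝ} {H : ℝ → E}
    (hH : ContDiffOn ℝ m H (Ico 0 δ)) :
    EqOn (iteratedDeriv m (normalizedMoment k H))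
      (normalizedMoment (k + m) (iteratedDerivWithin m H (Ico 0 δ))) (Ioo 0 δ) := by
  induction m with
  | zero => simp [EqOn]
  | succ m ih =>
    intro x hx
    set F := iteratedDerivWithin m H (Ico 0 δ)
    have hunique : UniqueDiffOn ℝ (Ico 0 δ) := uniqueDiffOn_Ico 0 δ
    have hF : ContinuousOn F (Ico 0 δ) :=
      hH.continuousOn_iteratedDerivWithin (mod_cast m.le_succ) hunique
    have hF' : ContinuousOn (iteratedDerivWithin (m + 1) H (Ico 0 δ)) (Ico 0 δ) :=
      hH.continuousOn_iteratedDerivWithin le_rfl hunique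
    have hFF' : ∀ t ∈ Ioo 0 δ, HasDerivAt F (iteratedDerivWithin (m + 1) H (Ico 0 δ) t) t :=
      fun t ht => hasDerivAt_iteratedDerivWithin hH hunique (Ico_mem_nhds ht.1 ht.2)
    have hsub : [[0, x]] ⊆ Ico 0 δ := uIcc_of_le hx.1.le ▸ Icc_subset_Ico_right hx.2
    have hmeas : StronglyMeasurableAtFilter F (𝓝 x) :=
      (hF.mono Ioo_subset_Ico_self).stronglyMeasurableAtFilter isOpen_Ioo x hx
    calc iteratedDeriv (m + 1) (normalizedMoment k H) x
        = deriv (normalizedMoment (k + m) F) x := by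
          rw [iteratedDeriv_succ]
          exact (ih (hH.of_le (mod_cast m.le_succ))).deriv isOpen_Ioo hx
      _ = normalizedMoment (k + (m + 1)) (iteratedDerivWithin (m + 1) H (Ico 0 δ)) x := by
          refine (hasDerivAt_normalizedMoment hx.1.ne' (hF.mono hsub) hmeas
            (hFF' x hx).continuousAt (fun t ht => hFF' t ?_)
            (hF'.mono hsub).intervalIntegrable).deriv
          rw [min_eq_left hx.1.le, max_eq_right hx.1.le] at ht
          exact Ioo_subset_Ioo_right hx.2.le ht

end NormalizedMoment

theorem stmt_11_general {E : Type*} [NormedAddCommGroup E] [NormedSpace ℝ E] [CompleteSpace E]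
    (k m : ℕ) {δ : ℝ} (hδ : 0 < δ) {H : ℝ → E} (hH : ContDiffOn ℝ m H (Ico 0 δ)) :
    Tendsto (iteratedDeriv m (normalizedMoment k H)) (𝓝[>] 0)
      (𝓝 (((k : ℝ) + m + 1)⁻¹ • iteratedDerivWithin m H (Ico 0 δ) 0)) := by
  have hcont : ContinuousOn (iteratedDerivWithin m H (Ico 0 δ)) (Ico 0 δ) :=
    hH.continuousOn_iteratedDerivWithin le_rfl (uniqueDiffOn_Ico 0 δ)
  have hlim : Tendsto (iteratedDerivWithin m H (Ico 0 δ)) (𝓝[>] 0)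
      (𝓝 (iteratedDerivWithin m H (Ico 0 δ) 0)) :=
    (hcont 0 ⟨le_rfl, hδ⟩).mono_left (nhdsWithin_le_of_mem (Ico_mem_nhdsGT hδ))
  have hint : ∀ᶠ x in 𝓝[>] 0,
      IntervalIntegrable (iteratedDerivWithin m H (Ico 0 δ)) volume 0 x := by
    filter_upwards [Ioo_mem_nhdsGT hδ] with x hx
    exact (hcont.mono (Icc_subset_Ico_right hx.2)).intervalIntegrable_of_Icc hx.1.le
  have hlim_moment := tendsto_normalizedMoment_nhdsGT_zero (k := k + m) hlim hint
  rw [Nat.cast_add] at hlim_moment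
  exact hlim_moment.congr' (eventuallyEq_of_mem (Ioo_mem_nhdsGT hδ)
    (iteratedDeriv_normalizedMoment_eqOn hH).symm)

/-- The limits (4.36)–(4.38) in the proof of Theorem 2.7: for `H` a `Cᵐ`
function on `[0,δ)`, the `m`-th derivative of `G r = (1/r²)∫₀^r τ H τ dτ`
tends to `H⁽ᵐ⁾(0)/(m+2)` as `r → 0⁺`. -/
theorem stmt_11 (m : ℕ) (δ : ℝ) (hδ : 0 < δ) (H : ℝ → ℝ)
    (hH : ContDiffOn ℝ m H (Set.Ico 0 δ)) :
    Filter.Tendsto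
      (fun r => iteratedDeriv m (fun x => (1 / x ^ 2) * ∫ τ in (0:ℝ)..x, τ * H τ) r)
      (nhdsWithin 0 (Set.Ioi 0))
      (nhds (iteratedDerivWithin m H (Set.Ico 0 δ) 0 / ((m : ℝ) + 2))) := by
  convert stmt_11_general 1 m hδ hH using 2
  · simp [funext_iff, normalizedMoment]
  · rw [smul_eq_mul, inv_mul_eq_div, Nat.cast_one]
    congr 1
    ring
end

section
/- Let δ > 0 and let φ : [0,δ) → ℝ be seven times continuously differentiable with φ'(0) = φ⁽³⁾(0) = φ⁽⁵⁾(0) = 0. Define (Df)(r) = f'(r)/r on (0,δ) and let D^k denote the k-fold iterate. Then the following limits hold as r → 0⁺: r⁷·(D⁷φ)(r) → −(5/16)·φ⁽⁷⁾(0); r⁵·(D⁶φ)(r) → (1/16)·φ⁽⁷⁾(0); r³·(D⁵φ)(r) → −(1/48)·φ⁽⁷⁾(0); and r·(D⁴φ)(r) → (1/48)·φ⁽⁷⁾(0). (Limits (4.16)–(4.17) in the proof of Lemma 4.1 of the paper, used to prove that radial C⁷ functions with vanishing odd derivatives at the origin lift to H⁷ functions.) -/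
/-- The operator `D` of Lemma 4.1: `(Df)(r) = f'(r)/r`. -/
noncomputable def Dop : (ℝ → ℝ) → (ℝ → ℝ) := fun f r => deriv f r / r

/-!
Subtract from `φ ∈ C^(2m+1)` its Taylor polynomial at `0` of degree `2m`. As the odd derivatives of
`φ` vanish, this polynomial is `q(r²)` with `deg q ≤ m`; since `D (q(r²)) = 2 q'(r²)`, it is killed
by `D^k` for `k > m`. The remainder behaves like `a r^(2m+1)`, `a = φ^(2m+1)(0) / (2m+1)!`, and its
derivatives like those of `a r^(2m+1)`. As `D` maps `a r^p` to `p a r^(p-2)`, also on this level of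
asymptotics, `D^k φ` behaves like `(2m+1) (2m-1) ⋯ (2m+3-2k) a r^(2m+1-2k)`.
-/

open Filter Polynomial Set Topology

section NhdsGT

variable {f g : ℝ → ℝ} {x : ℝ}

lemma deriv_eventuallyEq_nhdsGT (h : f =ᶠ[𝓝[>] x] g) : deriv f =ᶠ[𝓝[>] x] deriv g :=
  ((eventually_nhdsWithin_eventually_nhds_iff_of_isOpen isOpen_Ioi).2 h).mono
    fun _ hy => EventuallyEq.deriv_eq hy

lemma differentiableAt_nhdsGT_congr (h : f =ᶠ[𝓝[>] x] g)
    (hf : ∀ᶠ y in 𝓝[>] x, DifferentiableAt ℝ f y) :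
    ∀ᶠ y in 𝓝[>] x, DifferentiableAt ℝ g y := by
  filter_upwards [(eventually_nhdsWithin_eventually_nhds_iff_of_isOpen isOpen_Ioi).2 h, hf]
    with y hy hfy
  exact hfy.congr_of_eventuallyEq (EventuallyEq.symm hy)

end NhdsGT

/-- `f` is asymptotic to `a r ^ p` as `r → 0⁺`, and this relation may be differentiated `n` times:
for `j ≤ n`, the `j`-th derivative of `f` divided by `r ^ (p - j)` tends to
`p (p - 1) ⋯ (p - j + 1) a`. The coefficient `a` may be zero. -/
def HasPowAsymptotics (f : ℝ → ℝ) (a : ℝ) (p : ℤ) : ℕ → Prop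
  | 0 => Tendsto (fun r => f r / r ^ p) (𝓝[>] 0) (𝓝 a)
  | n + 1 => Tendsto (fun r => f r / r ^ p) (𝓝[>] 0) (𝓝 a) ∧
      (∀ᶠ r in 𝓝[>] 0, DifferentiableAt ℝ f r) ∧ HasPowAsymptotics (deriv f) (p * a) (p - 1) n

namespace HasPowAsymptotics

variable {f g : ℝ → ℝ} {a b : ℝ} {p : ℤ} {n : ℕ}

lemma tendsto_div_zpow (hf : HasPowAsymptotics f a p n) :
    Tendsto (fun r => f r / r ^ p) (𝓝[>] 0) (𝓝 a) := by
  cases n with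
  | zero => exact hf
  | succ n => exact hf.1

lemma eventually_differentiableAt (hf : HasPowAsymptotics f a p (n + 1)) :
    ∀ᶠ r in 𝓝[>] 0, DifferentiableAt ℝ f r :=
  hf.2.1

protected lemma deriv (hf : HasPowAsymptotics f a p (n + 1)) :
    HasPowAsymptotics (deriv f) (p * a) (p - 1) n :=
  hf.2.2

lemma of_succ (hf : HasPowAsymptotics f a p (n + 1)) : HasPowAsymptotics f a p n := by
  induction n generalizing f a p with
  | zero => exact hf.tendsto_div_zpow
  | succ n ih => exact ⟨hf.tendsto_div_zpow, hf.eventually_differentiableAt, ih hf.deriv⟩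

protected lemma congr (hf : HasPowAsymptotics f a p n) (h : f =ᶠ[𝓝[>] 0] g) :
    HasPowAsymptotics g a p n := by
  induction n generalizing f g a p with
  | zero => exact hf.tendsto_div_zpow.congr' (h.div .rfl)
  | succ n ih =>
    exact ⟨hf.tendsto_div_zpow.congr' (h.div .rfl),
      differentiableAt_nhdsGT_congr h hf.eventually_differentiableAt,
      ih hf.deriv (deriv_eventuallyEq_nhdsGT h)⟩

protected lemma sub (hf : HasPowAsymptotics f a p n) (hg : HasPowAsymptotics g b p n) :
    HasPowAsymptotics (f - g) (a - b) p n := by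
  induction n generalizing f g a b p with
  | zero => simpa only [HasPowAsymptotics, Pi.sub_apply, sub_div] using Tendsto.sub hf hg
  | succ n ih =>
    refine ⟨?_, ?_, ?_⟩
    · simpa only [Pi.sub_apply, sub_div] using hf.tendsto_div_zpow.sub hg.tendsto_div_zpow
    · filter_upwards [hf.eventually_differentiableAt, hg.eventually_differentiableAt]
        with r hfr hgr using hfr.sub hgr
    · rw [mul_sub]
      refine (ih hf.deriv hg.deriv).congr ?_
      filter_upwards [hf.eventually_differentiableAt, hg.eventually_differentiableAt]
        with r hfr hgr using (deriv_sub hfr hgr).symm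

lemma div_id (hf : HasPowAsymptotics f a p n) :
    HasPowAsymptotics (fun r => f r / r) a (p - 1) n := by
  have tendsto_div_id {f : ℝ → ℝ} {a : ℝ} {p : ℤ}
      (h : Tendsto (fun r => f r / r ^ p) (𝓝[>] 0) (𝓝 a)) :
      Tendsto (fun r => f r / r / r ^ (p - 1)) (𝓝[>] 0) (𝓝 a) := by
    refine h.congr' ?_
    filter_upwards [self_mem_nhdsWithin] with r (hr : 0 < r)
    rw [div_div, mul_comm, ← zpow_add_one₀ hr.ne', sub_add_cancel]
  induction n generalizing f a p with
  | zero => exact tendsto_div_id hf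
  | succ n ih =>
    refine ⟨tendsto_div_id hf.tendsto_div_zpow, ?_, ?_⟩
    · filter_upwards [hf.eventually_differentiableAt, self_mem_nhdsWithin] with r hfr hr
      exact hfr.div differentiableAt_id (ne_of_gt hr)
    · have hderiv : (fun r => deriv f r / r) - (fun r => f r / r / r) =ᶠ[𝓝[>] 0]
          deriv (fun r => f r / r) := by
        filter_upwards [hf.eventually_differentiableAt, self_mem_nhdsWithin]
          with r hfr (hr : 0 < r)
        rw [(hfr.hasDerivAt.fun_div (hasDerivAt_id' r) hr.ne').deriv, Pi.sub_apply]
        field_simp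
      convert ((ih hf.deriv).sub (ih (ih hf.of_succ))).congr hderiv using 1
      push_cast
      ring

lemma map_Dop (hf : HasPowAsymptotics f a p (n + 1)) :
    HasPowAsymptotics (Dop f) (p * a) (p - 2) n := by
  have h := hf.deriv.div_id
  rwa [sub_sub, one_add_one_eq_two] at h

lemma map_Dop_iterate {k : ℕ} (hf : HasPowAsymptotics f a p (n + k)) :
    HasPowAsymptotics (Dop^[k] f) ((∏ i ∈ Finset.range k, ((p : ℝ) - 2 * i)) * a)
      (p - 2 * k) n := by
  induction k generalizing n with
  | zero => simpa using hf
  | succ k ih =>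
    rw [Function.iterate_succ_apply', Finset.prod_range_succ]
    convert (ih (n := n + 1) (by rwa [add_right_comm])).map_Dop using 1
    all_goals push_cast; ring

end HasPowAsymptotics

section Taylor

variable {f : ℝ → ℝ} {s : Set ℝ} {x : ℝ} {n : ℕ}

lemma uniqueDiffOn_of_mem_nhdsGE (hs : Convex ℝ s) (hx : s ∈ 𝓝[≥] x) : UniqueDiffOn ℝ s := by
  obtain ⟨y, hxy, hy⟩ := mem_nhdsGE_iff_exists_Ico_subset.1 hx
  refine uniqueDiffOn_convex hs ((Set.nonempty_Ioo.2 hxy).mono ?_)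
  rw [← interior_Ico]
  exact interior_mono hy

lemma derivWithin_eventuallyEq_nhdsGT (hs : s ∈ 𝓝[>] x) : derivWithin f s =ᶠ[𝓝[>] x] deriv f :=
  ((eventually_nhdsWithin_eventually_nhds_iff_of_isOpen isOpen_Ioi).2 hs).mono
    fun _ hy => derivWithin_of_mem_nhds hy

lemma eventually_differentiableAt_nhdsGT (hf : DifferentiableOn ℝ f s) (hs : s ∈ 𝓝[>] x) :
    ∀ᶠ y in 𝓝[>] x, DifferentiableAt ℝ f y :=
  ((eventually_nhdsWithin_eventually_nhds_iff_of_isOpen isOpen_Ioi).2 hs).mono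
    fun _ hy => hf.differentiableAt hy

lemma tendsto_sub_taylorWithinEval_div_pow_succ (hs : Convex ℝ s) (hx : s ∈ 𝓝[≥] x)
    (hf : ContDiffOn ℝ (n + 1 : ℕ) f s) :
    Tendsto (fun y => (f y - taylorWithinEval f n s x y) / (y - x) ^ (n + 1)) (𝓝[>] x)
      (𝓝 (iteratedDerivWithin (n + 1) f s x / (n + 1).factorial)) := by
  set c := iteratedDerivWithin (n + 1) f s x / (n + 1).factorial with hc
  have h : Tendsto (fun y => (f y - taylorWithinEval f (n + 1) s x y) / (y - x) ^ (n + 1) + c)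
      (𝓝[>] x) (𝓝 c) := by
    simpa using ((Real.taylor_tendsto hs (mem_of_mem_nhdsWithin self_mem_Ici hx) hf).mono_left
      (nhdsWithin_le_of_mem (nhdsWithin_mono _ Set.Ioi_subset_Ici_self hx))).add_const c
  refine h.congr' ?_
  filter_upwards [self_mem_nhdsWithin] with y (hy : x < y)
  have hy' : y - x ≠ 0 := sub_ne_zero.2 hy.ne'
  rw [taylorWithinEval_succ, smul_eq_mul, hc, Nat.factorial_succ, Nat.cast_mul, Nat.cast_add_one]
  field_simp
  ring

lemma hasPowAsymptotics_sub_const (hs : Convex ℝ s) (h0 : s ∈ 𝓝[≥] 0) (hf : ContDiffOn ℝ 1 f s) :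
    HasPowAsymptotics (fun r => f r - f 0) (derivWithin f s 0) 1 1 := by
  have hs_gt : s ∈ 𝓝[>] 0 := nhdsWithin_mono _ Set.Ioi_subset_Ici_self h0
  refine ⟨?_, ?_, ?_⟩
  · simpa [iteratedDerivWithin_one] using
      tendsto_sub_taylorWithinEval_div_pow_succ (n := 0) hs h0 (by simpa using hf)
  · simpa using eventually_differentiableAt_nhdsGT (hf.differentiableOn one_ne_zero) hs_gt
  · have hcont : Tendsto (derivWithin f s) (𝓝[>] 0) (𝓝 (derivWithin f s 0)) :=
      (hf.continuousOn_derivWithin (uniqueDiffOn_of_mem_nhdsGE hs h0) le_rfl 0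
        (mem_of_mem_nhdsWithin self_mem_Ici h0)).mono_left (nhdsWithin_le_of_mem hs_gt)
    simpa [HasPowAsymptotics] using hcont.congr' (derivWithin_eventuallyEq_nhdsGT hs_gt)

lemma hasPowAsymptotics_sub_taylorWithinEval (hs : Convex ℝ s) (h0 : s ∈ 𝓝[≥] 0)
    (hf : ContDiffOn ℝ (n + 1 : ℕ) f s) :
    HasPowAsymptotics (fun r => f r - taylorWithinEval f n s 0 r)
      (iteratedDerivWithin (n + 1) f s 0 / (n + 1).factorial) (n + 1 : ℕ) (n + 1) := by
  induction n generalizing f with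
  | zero => simpa [iteratedDerivWithin_one] using hasPowAsymptotics_sub_const hs h0 (mod_cast hf)
  | succ n ih =>
    have hs_gt : s ∈ 𝓝[>] 0 := nhdsWithin_mono _ Set.Ioi_subset_Ici_self h0
    have hf' : ContDiffOn ℝ (n + 1 : ℕ) (derivWithin f s) s :=
      hf.derivWithin (uniqueDiffOn_of_mem_nhdsGE hs h0) (by norm_cast)
    have hdiff := eventually_differentiableAt_nhdsGT (hf.differentiableOn (by simp)) hs_gt
    refine ⟨?_, ?_, ?_⟩
    · simpa only [sub_zero, zpow_natCast] using
        tendsto_sub_taylorWithinEval_div_pow_succ hs h0 hf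
    · filter_upwards [hdiff] with r hr
      exact hr.sub (hasDerivAt_taylorWithinEval_succ f n).differentiableAt
    · have hderiv : (fun r => derivWithin f s r - taylorWithinEval (derivWithin f s) n s 0 r)
          =ᶠ[𝓝[>] 0] deriv (fun r => f r - taylorWithinEval f (n + 1) s 0 r) := by
        filter_upwards [hdiff, derivWithin_eventuallyEq_nhdsGT hs_gt] with r hr hr'
        rw [(hr.hasDerivAt.fun_sub (hasDerivAt_taylorWithinEval_succ f n)).deriv, hr']
      convert (ih hf').congr hderiv using 1
      · rw [← iteratedDerivWithin_succ', Nat.factorial_succ (n + 1)]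
        push_cast
        field_simp
      · push_cast
        ring

end Taylor

section Even

lemma sum_range_two_mul_add_one_of_odd {M : Type*} [AddCommMonoid M] {c : ℕ → M} {m : ℕ}
    (hc : ∀ i < m, c (2 * i + 1) = 0) :
    ∑ j ∈ Finset.range (2 * m + 1), c j = ∑ i ∈ Finset.range (m + 1), c (2 * i) := by
  induction m with
  | zero => simp
  | succ m ih =>
    rw [mul_add_one, Finset.sum_range_succ, Finset.sum_range_succ, ih fun i hi => hc i (by lia),
      hc m m.lt_add_one, add_zero, Finset.sum_range_succ _ (m + 1), mul_add_one]

lemma exists_taylorWithinEval_eq_eval_sq {f : ℝ → ℝ} {s : Set ℝ} {m : ℕ}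
    (hodd : ∀ i < m, iteratedDerivWithin (2 * i + 1) f s 0 = 0) :
    ∃ q : ℝ[X], q.natDegree ≤ m ∧
      taylorWithinEval f (2 * m) s 0 = fun r => q.eval (r ^ 2) := by
  refine ⟨∑ i ∈ Finset.range (m + 1), monomial i (taylorCoeffWithin f (2 * i) s 0), ?_, ?_⟩
  · refine natDegree_sum_le_of_forall_le _ _ fun i hi => ?_
    exact (natDegree_monomial_le _).trans (Nat.lt_succ_iff.1 (Finset.mem_range.1 hi))
  · ext r
    rw [taylor_within_apply, sum_range_two_mul_add_one_of_odd fun i hi => by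
      simp [hodd i hi], eval_finsetSum]
    refine Finset.sum_congr rfl fun i _ => ?_
    rw [eval_monomial, taylorCoeffWithin, ← pow_mul, sub_zero]
    simp only [smul_eq_mul]
    ring

lemma Dop_eval_sq_add (q : ℝ[X]) {R : ℝ → ℝ} {r : ℝ} (hr : r ≠ 0) (hR : DifferentiableAt ℝ R r) :
    Dop (fun r => q.eval (r ^ 2) + R r) r = (C 2 * derivative q).eval (r ^ 2) + Dop R r := by
  have hq : HasDerivAt (fun r => q.eval (r ^ 2)) (q.derivative.eval (r ^ 2) * (2 * r)) r := by
    simpa [Function.comp_def] using (q.hasDerivAt (r ^ 2)).comp r (hasDerivAt_pow 2 r)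
  rw [Dop, Dop, (hq.fun_add hR.hasDerivAt).deriv, eval_C_mul]
  field_simp

lemma Dop_iterate_eval_sq_add (q : ℝ[X]) {R : ℝ → ℝ} {a : ℝ} {p : ℤ} {n k : ℕ}
    (hR : HasPowAsymptotics R a p (n + k)) :
    Dop^[k] (fun r => q.eval (r ^ 2) + R r) =ᶠ[𝓝[>] 0]
      fun r => (C (2 ^ k) * derivative^[k] q).eval (r ^ 2) + Dop^[k] R r := by
  induction k generalizing n with
  | zero => simp
  | succ k ih =>
    replace hR : HasPowAsymptotics R a p (n + 1 + k) := by rwa [add_right_comm]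
    have hdiff := hR.map_Dop_iterate.eventually_differentiableAt
    simp only [Function.iterate_succ_apply']
    filter_upwards [deriv_eventuallyEq_nhdsGT (ih hR), hdiff, self_mem_nhdsWithin]
      with r hderiv hr (hr_pos : 0 < r)
    rw [Dop, hderiv, ← Dop, Dop_eval_sq_add _ hr_pos.ne' hr, derivative_C_mul, ← mul_assoc, ← C_mul,
      ← pow_succ']

end Even

theorem stmt_13_general {s : Set ℝ} {φ : ℝ → ℝ} {m k : ℕ} (hs : Convex ℝ s) (h0 : s ∈ 𝓝[≥] 0)
    (hφ : ContDiffOn ℝ (2 * m + 1 : ℕ) φ s)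
    (hodd : ∀ i < m, iteratedDerivWithin (2 * i + 1) φ s 0 = 0)
    (hmk : m < k) (hkm : k ≤ 2 * m + 1) :
    Tendsto (fun r => r ^ (2 * k - (2 * m + 1)) * Dop^[k] φ r) (𝓝[>] 0)
      (𝓝 ((∏ i ∈ Finset.range k, (2 * m + 1 - 2 * i : ℝ)) / (2 * m + 1).factorial *
        iteratedDerivWithin (2 * m + 1) φ s 0)) := by
  obtain ⟨q, hq_deg, hq⟩ := exists_taylorWithinEval_eq_eval_sq hodd
  set R : ℝ → ℝ := fun r => φ r - taylorWithinEval φ (2 * m) s 0 r with hR_def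
  have hR : HasPowAsymptotics R (iteratedDerivWithin (2 * m + 1) φ s 0 / (2 * m + 1).factorial)
      (2 * m + 1 : ℕ) (2 * m + 1 - k + k) := by
    rw [Nat.sub_add_cancel hkm]
    exact hasPowAsymptotics_sub_taylorWithinEval hs h0 hφ
  have hDop : Dop^[k] φ =ᶠ[𝓝[>] 0] Dop^[k] R := by
    have hφ_eq : (fun r => q.eval (r ^ 2) + R r) = φ := by
      ext r
      simp [hR_def, hq]
    simpa [hφ_eq, iterate_derivative_eq_zero (hq_deg.trans_lt hmk)] using
      Dop_iterate_eval_sq_add q hR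
  have hexp : ((2 * m + 1 : ℕ) : ℤ) - 2 * k = -(2 * k - (2 * m + 1) : ℕ) := by lia
  have hlim := hR.map_Dop_iterate.tendsto_div_zpow
  rw [hexp, ← mul_comm_div] at hlim
  push_cast at hlim
  refine hlim.congr' ?_
  filter_upwards [hDop] with r hr
  rw [hr, zpow_neg, zpow_natCast, div_inv_eq_mul, mul_comm]

/-- Limits (4.16)–(4.17) in the proof of Lemma 4.1: for a `C⁷` function `φ` on
`[0,δ)` with vanishing first, third and fifth one-sided derivatives at `0`,
the weighted iterates `r⁷D⁷φ, r⁵D⁶φ, r³D⁵φ, rD⁴φ` converge as `r → 0⁺` to the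
stated multiples of `φ⁽⁷⁾(0)`. -/
theorem stmt_13 (δ : ℝ) (hδ : 0 < δ) (φ : ℝ → ℝ)
    (hφ : ContDiffOn ℝ 7 φ (Set.Ico 0 δ))
    (h1 : derivWithin φ (Set.Ico 0 δ) 0 = 0)
    (h3 : iteratedDerivWithin 3 φ (Set.Ico 0 δ) 0 = 0)
    (h5 : iteratedDerivWithin 5 φ (Set.Ico 0 δ) 0 = 0) :
    Filter.Tendsto (fun r => r ^ 7 * (Dop^[7] φ) r) (nhdsWithin 0 (Set.Ioi 0))
      (nhds (-(5 / 16) * iteratedDerivWithin 7 φ (Set.Ico 0 δ) 0)) ∧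
    Filter.Tendsto (fun r => r ^ 5 * (Dop^[6] φ) r) (nhdsWithin 0 (Set.Ioi 0))
      (nhds ((1 / 16) * iteratedDerivWithin 7 φ (Set.Ico 0 δ) 0)) ∧
    Filter.Tendsto (fun r => r ^ 3 * (Dop^[5] φ) r) (nhdsWithin 0 (Set.Ioi 0))
      (nhds (-(1 / 48) * iteratedDerivWithin 7 φ (Set.Ico 0 δ) 0)) ∧
    Filter.Tendsto (fun r => r * (Dop^[4] φ) r) (nhdsWithin 0 (Set.Ioi 0))
      (nhds ((1 / 48) * iteratedDerivWithin 7 φ (Set.Ico 0 δ) 0)) := by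
  have hodd : ∀ i < 3, iteratedDerivWithin (2 * i + 1) φ (Set.Ico 0 δ) 0 = 0 := by
    intro i hi
    interval_cases i <;> simp [iteratedDerivWithin_one, h1, h3, h5]
  have h {k : ℕ} (hk : 3 < k) (hk' : k ≤ 7) :=
    stmt_13_general (convex_Ico 0 δ) (Ico_mem_nhdsGE hδ) (mod_cast hφ) hodd hk hk'
  refine ⟨?_, ?_, ?_, ?_⟩
  · convert h (k := 7) (by norm_num) le_rfl using 3
    norm_num [Finset.prod_range_succ, Nat.factorial]
  · convert h (k := 6) (by norm_num) (by norm_num) using 3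
    norm_num [Finset.prod_range_succ, Nat.factorial]
  · convert h (k := 5) (by norm_num) (by norm_num) using 3
    norm_num [Finset.prod_range_succ, Nat.factorial]
  · convert h (k := 4) (by norm_num) (by norm_num) using 3 <;>
      norm_num [Finset.prod_range_succ, Nat.factorial]
end

section
/- Let γ > 1, c_v > 0 and let p, ρ, q be positive reals; set c² = γp/ρ and M² = q²/c². Then the determinant of the 4×4 real matrix with rows (q/c², 0, ρ, −ρq/(γc_v)), (1+M², 0, 2ρq, −ρq²/(γc_v)), (0, 1, 0, 0), (1/ρ, 0, q, p/((γ−1)c_v ρ)) equals (p/((γ−1)c_v))·(1 − M²); in particular the matrix is invertible whenever M ≠ 1. (Determinant identity (5.34) of the paper, showing the linearized Rankine–Hugoniot system is uniquely solvable for subsonic downstream states.) -/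
/-!
In the unknowns pressure, tangential velocity, normal velocity `q` and entropy, the rows of `A_s`
are the differentials of mass flux, momentum flux, tangential velocity and the Bernoulli function.
Momentum minus `q` times mass is `dp + ρ q du`; by the Gibbs relation `dh = dp / ρ + T dS`,
Bernoulli minus `1 / ρ` times this is `T dS`. Hence the determinant is `T` times the one of the
system formed by mass, `dp + ρ q du` and the tangential velocity, which is `ρ (1 - M²)`. The
equation of state enters only through `∂ρ/∂p = 1 / c²`, `∂ρ/∂S` and `T`.
-/

section JumpGradient

variable {R : Type*} [CommRing R] (q κ σ T : R) (ρ : Rˣ)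

/-- The gradient of the Rankine–Hugoniot functions for a general equation of state, with
`κ = ∂ρ/∂p`, `σ = ∂ρ/∂S` and temperature `T`, at density `ρ` and normal velocity `q` (the tangential
velocity vanishes). Columns: pressure, tangential velocity, normal velocity, entropy. -/
def jumpGradient : Matrix (Fin 4) (Fin 4) R :=
  !![q * κ,         0, ρ,         q * σ;
     1 + q ^ 2 * κ, 0, 2 * ρ * q, q ^ 2 * σ;
     0,             1, 0,         0;
     ↑ρ⁻¹,          0, q,         T]

/-- The unitriangular matrix that recovers the rows of `jumpGradient` from those of
`reducedJumpGradient`. -/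
def jumpElimination : Matrix (Fin 4) (Fin 4) R :=
  !![1, 0,    0, 0;
     q, 1,    0, 0;
     0, 0,    1, 0;
     0, ↑ρ⁻¹, 0, 1]

/-- The gradient of the Rankine–Hugoniot functions after row elimination: the second row is the
differential `dp + ρ q du` and the last one is `T dS`. -/
def reducedJumpGradient : Matrix (Fin 4) (Fin 4) R :=
  !![q * κ, 0, ρ,     q * σ;
     1,     0, ρ * q, 0;
     0,     1, 0,     0;
     0,     0, 0,     T]

theorem jumpElimination_mul_reducedJumpGradient :
    jumpElimination q ρ * reducedJumpGradient q κ σ T ρ = jumpGradient q κ σ T ρ := by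
  ext i j
  fin_cases i <;> fin_cases j <;>
    simp [jumpElimination, reducedJumpGradient, jumpGradient, Matrix.mul_apply, Fin.sum_univ_four]
      <;> ring

theorem det_jumpElimination : (jumpElimination q ρ).det = 1 := by
  have lower : (jumpElimination q ρ).IsLowerTriangular := by
    intro i j (hij : i < j)
    fin_cases i <;> fin_cases j <;> simp_all [jumpElimination]
  rw [Matrix.det_of_isLowerTriangular _ lower]
  simp [jumpElimination, Fin.prod_univ_four]

theorem det_reducedJumpGradient :
    (reducedJumpGradient q κ σ T ρ).det = ρ * T * (1 - q ^ 2 * κ) := by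
  have expand_last_row : (reducedJumpGradient q κ σ T ρ).det =
      T * !![q * κ, 0, (ρ : R); 1, 0, ρ * q; 0, 1, 0].det := by
    rw [Matrix.det_succ_row _ 3]
    simp [reducedJumpGradient, Fin.sum_univ_four, Matrix.det_fin_three, Fin.succAbove,
      (show Even 6 by decide).neg_one_pow]
  rw [expand_last_row, Matrix.det_fin_three]
  simp only [Matrix.of_apply, Matrix.cons_val]
  ring

theorem det_jumpGradient : (jumpGradient q κ σ T ρ).det = ρ * T * (1 - q ^ 2 * κ) := by
  rw [← jumpElimination_mul_reducedJumpGradient, Matrix.det_mul, det_jumpElimination, one_mul,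
    det_reducedJumpGradient]

theorem isUnit_jumpGradient_iff :
    IsUnit (jumpGradient q κ σ T ρ) ↔ IsUnit T ∧ IsUnit (1 - q ^ 2 * κ) := by
  rw [Matrix.isUnit_iff_isUnit_det, det_jumpGradient, mul_assoc, Units.isUnit_units_mul,
    IsUnit.mul_iff]

end JumpGradient

theorem stmt_14_general {K : Type*} [Field K] (γ cv p ρ q c2 M2 : K) (hγ₀ : γ ≠ 0) (hγ₁ : γ ≠ 1)
    (hcv : cv ≠ 0) (hp : p ≠ 0) (hρ : ρ ≠ 0) (hc2 : c2 = γ * p / ρ) (hM2 : M2 = q ^ 2 / c2)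
    (A : Matrix (Fin 4) (Fin 4) K)
    (hA : A = !![q / c2, 0, ρ, -(ρ * q / (γ * cv));
                 1 + M2, 0, 2 * ρ * q, -(ρ * q ^ 2 / (γ * cv));
                 0, 1, 0, 0;
                 1 / ρ, 0, q, p / ((γ - 1) * cv * ρ)]) :
    A.det = (p / ((γ - 1) * cv)) * (1 - M2) ∧ (IsUnit A ↔ M2 ≠ 1) := by
  have hγ : γ - 1 ≠ 0 := sub_ne_zero.mpr hγ₁
  have ideal_gas : A = jumpGradient q c2⁻¹ (-(ρ / (γ * cv))) (p / ((γ - 1) * cv * ρ))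
      (Units.mk0 ρ hρ) := by
    simp only [hA, hM2, jumpGradient, Units.val_inv_eq_inv_val, Units.val_mk0]
    ring_nf
  have hT : p / ((γ - 1) * cv * ρ) ≠ 0 :=
    div_ne_zero hp (mul_ne_zero (mul_ne_zero hγ hcv) hρ)
  have hM : q ^ 2 * c2⁻¹ = M2 := by rw [hM2, div_eq_mul_inv]
  rw [ideal_gas, det_jumpGradient, isUnit_jumpGradient_iff, hM, Units.val_mk0]
  constructor
  · field_simp
  · rw [and_iff_right hT.isUnit, isUnit_iff_ne_zero, sub_ne_zero, ne_comm]

/-- Determinant identity (5.34): the gradient matrix `A_s` of the linearized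
Rankine–Hugoniot conditions has determinant `(p/((γ-1)c_v))(1 - M²)`; in
particular it is invertible whenever `M² ≠ 1`. -/
theorem stmt_14 (γ cv p ρ q c2 M2 : ℝ) (hγ : 1 < γ) (hcv : 0 < cv)
    (hp : 0 < p) (hρ : 0 < ρ) (hq : 0 < q)
    (hc2 : c2 = γ * p / ρ) (hM2 : M2 = q ^ 2 / c2)
    (A : Matrix (Fin 4) (Fin 4) ℝ)
    (hA : A = !![q / c2, 0, ρ, -(ρ * q / (γ * cv));
                 1 + M2, 0, 2 * ρ * q, -(ρ * q ^ 2 / (γ * cv));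
                 0, 1, 0, 0;
                 1 / ρ, 0, q, p / ((γ - 1) * cv * ρ)]) :
    A.det = (p / ((γ - 1) * cv)) * (1 - M2) ∧ (M2 ≠ 1 → IsUnit A) := by
  have general := stmt_14_general γ cv p ρ q c2 M2 (zero_lt_one.trans hγ).ne' hγ.ne'
    hcv.ne' hp.ne' hρ.ne' hc2 hM2 A hA
  exact ⟨general.1, general.2.mpr⟩
end

section
/- Let n ≥ 2, R > 0, and let φ : [0,R] × ℝ → ℝ. Define Φ on {(x,t) ∈ ℝⁿ × ℝ : ‖x‖ ≤ R} by Φ(x,t) = φ(‖x‖, t). Then Φ is continuously differentiable on the closed set B̄_R × ℝ if and only if φ is continuously differentiable on [0,R] × ℝ and ∂_r φ(0,t) = 0 for every t ∈ ℝ. (The first-order case of Lemma 4.1 of the paper, characterizing when radially symmetric functions are smooth across the symmetry axis.) -/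
/-!
Away from the axis the claim is the chain rule, the norm being `C¹` there, and the derivative is
`dΦ = ∂_r φ · d‖x‖ + ∂_t φ · dt`. The differential `d‖x‖` does not exist at `x = 0`, but it is
bounded by `1` elsewhere, so if `∂_r φ (0, t) = 0` then the first term tends to `0` at the axis;
the same condition makes `Φ` differentiable on the axis. Conversely, `r ↦ Φ (r • e, t)` recovers
`φ` for a unit vector `e`, and `x ↦ Φ (x, t)` is even, so its derivative at `0` vanishes.
-/

open Set Filter Topology Metric

section Calculus

variable {𝕜 E F G : Type*} [NontriviallyNormedField 𝕜] [NormedAddCommGroup E] [NormedSpace 𝕜 E]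
  [NormedAddCommGroup F] [NormedSpace 𝕜 F] [NormedAddCommGroup G] [NormedSpace 𝕜 G]

theorem apply_prodMk_eq_smul_add (L : 𝕜 × F →L[𝕜] G) (r : 𝕜) (t : F) :
    L (r, t) = r • L (1, 0) + L (0, t) := by
  rw [← map_smul, ← map_add]
  simp

theorem fderiv_zero_of_even [CharZero 𝕜] {f : E → G} (hf : f.Even) : fderiv 𝕜 f 0 = 0 := by
  have h : fderiv 𝕜 f 0 = -fderiv 𝕜 f 0 := by
    simpa [hf.eq] using fderiv_comp_smul (f := f) (x := 0) (-1 : 𝕜)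
  have : IsAddTorsionFree (E →L[𝕜] G) := .of_isTorsionFree 𝕜 _
  exact self_eq_neg.mp h

theorem contDiffOn_one_of_hasFDerivWithinAt {f : E → G} {f' : E → E →L[𝕜] G} {s : Set E}
    (hf : ∀ x ∈ s, HasFDerivWithinAt f (f' x) s x) (hf' : ContinuousOn f' s) :
    ContDiffOn 𝕜 1 f s := by
  rw [← zero_add (1 : WithTop ℕ∞), contDiffOn_succ_iff_hasFDerivWithinAt (by simp)]
  intro x hx
  refine ⟨s, ?_, by simp, f', hf, contDiffOn_zero.mpr hf'⟩
  rw [insert_eq_of_mem hx]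
  exact self_mem_nhdsWithin

theorem derivWithin_comp_prodMk_left {φ : 𝕜 × F → G} {I : Set 𝕜} {T : Set F} {r : 𝕜} {t : F}
    (hφ : DifferentiableWithinAt 𝕜 φ (I ×ˢ T) (r, t)) (hI : UniqueDiffWithinAt 𝕜 I r)
    (ht : t ∈ T) :
    derivWithin (fun s ↦ φ (s, t)) I r = fderivWithin 𝕜 φ (I ×ˢ T) (r, t) (1, 0) := by
  have hslice : HasDerivWithinAt (fun s : 𝕜 ↦ (s, t)) (1, 0) I r :=
    (hasDerivWithinAt_id r I).prodMk (hasDerivWithinAt_const r I t)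
  exact (hφ.hasFDerivWithinAt.comp_hasDerivWithinAt r hslice
    ((mapsTo_id I).prodMk fun _ _ ↦ ht)).derivWithin hI

end Calculus

section CylindricalCoordinates

variable {E F : Type*}

/-- The pair of the distance to the axis `{0} × F` and the position along it. Radially symmetric
functions are the compositions `φ ∘ cylCoords`, and radially symmetric domains are the preimages
under `cylCoords`. -/
def cylCoords [Norm E] (p : E × F) : ℝ × F := (‖p.1‖, p.2)

@[simp]
theorem cylCoords_zero_left [SeminormedAddGroup E] (t : F) : cylCoords ((0 : E), t) = (0, t) := by
  simp [cylCoords]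

theorem cylCoords_smul_of_norm_eq_one [SeminormedAddCommGroup E] [NormedSpace ℝ E] {e : E}
    (he : ‖e‖ = 1) {r : ℝ} (hr : 0 ≤ r) (t : F) : cylCoords (r • e, t) = (r, t) := by
  simp [cylCoords, norm_smul, he, abs_of_nonneg hr]

theorem continuous_cylCoords [SeminormedAddGroup E] [TopologicalSpace F] :
    Continuous (cylCoords : E × F → ℝ × F) := by
  unfold cylCoords
  fun_prop

theorem closedBall_prod_eq_preimage_cylCoords [SeminormedAddCommGroup E] (R : ℝ) (T : Set F) :
    closedBall (0 : E) R ×ˢ T = cylCoords ⁻¹' (Icc 0 R ×ˢ T) := by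
  ext p
  simp [cylCoords]

end CylindricalCoordinates

section RadialFunctions

variable {E F G : Type*} [NormedAddCommGroup E] [NormedSpace ℝ E]
  [NormedAddCommGroup F] [NormedSpace ℝ F] [NormedAddCommGroup G] [NormedSpace ℝ G]

theorem fderiv_norm_zero : fderiv ℝ (norm : E → ℝ) 0 = 0 :=
  fderiv_zero_of_even norm_neg

theorem norm_fderiv_norm_le_one (x : E) : ‖fderiv ℝ norm x‖ ≤ 1 := by
  simpa using norm_fderiv_le_of_lipschitz ℝ (lipschitzWith_one_norm (E := E)) (x₀ := x)

/-- The derivative at a point `(x, t)` of a radially symmetric function whose profile has derivative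
`L = (∂_r φ, ∂_t φ)` at `(‖x‖, t)`, that is `∂_r φ · d‖x‖ + ∂_t φ · dt`. At `x = 0` the first term
is `0`, since `fderiv` returns `0` there. -/
noncomputable def radialFDeriv (L : ℝ × F →L[ℝ] G) (x : E) : E × F →L[ℝ] G :=
  (fderiv ℝ norm x ∘L .fst ℝ E F).smulRight (L (1, 0)) + L ∘L .inr ℝ ℝ F ∘L .snd ℝ E F

theorem radialFDeriv_eq_comp_prodMap (L : ℝ × F →L[ℝ] G) (x : E) :
    radialFDeriv L x = L ∘L (fderiv ℝ norm x).prodMap (.id ℝ F) := by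
  ext p <;> simp [radialFDeriv, apply_prodMk_eq_smul_add L (fderiv ℝ norm x _)]

theorem hasFDerivWithinAt_comp_cylCoords {φ : ℝ × F → G} {D : Set (ℝ × F)} {L : ℝ × F →L[ℝ] G}
    {p : E × F} (hφ : HasFDerivWithinAt φ L D (cylCoords p)) (hp : DifferentiableAt ℝ norm p.1) :
    HasFDerivWithinAt (φ ∘ cylCoords) (radialFDeriv L p.1) (cylCoords ⁻¹' D) p := by
  have hcyl : HasFDerivAt cylCoords ((fderiv ℝ norm p.1).prodMap (.id ℝ F)) p :=
    hp.hasFDerivAt.prodMap p (hasFDerivAt_id p.2)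
  rw [radialFDeriv_eq_comp_prodMap]
  exact hφ.comp p hcyl.hasFDerivWithinAt (mapsTo_preimage _ _)

theorem hasFDerivWithinAt_comp_cylCoords_axis {φ : ℝ × F → G} {D : Set (ℝ × F)}
    {L : ℝ × F →L[ℝ] G} {t : F} (hφ : HasFDerivWithinAt φ L D (0, t)) (hL : L (1, 0) = 0) :
    HasFDerivWithinAt (φ ∘ cylCoords) (radialFDeriv L (0 : E)) (cylCoords ⁻¹' D) (0, t) := by
  have hcyl : Tendsto cylCoords (𝓝[cylCoords ⁻¹' D] ((0 : E), t)) (𝓝[D] (0, t)) :=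
    cylCoords_zero_left (E := E) t ▸
      continuous_cylCoords.continuousWithinAt.tendsto_nhdsWithin (mapsTo_preimage _ _)
  refine .of_isLittleO (((hφ.isLittleO.comp_tendsto hcyl).congr_left fun p ↦ ?_).trans_isBigO
    (.of_bound' (.of_forall fun p ↦ ?_)))
  · simp [cylCoords, radialFDeriv, fderiv_norm_zero, hL,
      apply_prodMk_eq_smul_add L ‖p.1‖, -map_sub]
  · simp [cylCoords, Prod.norm_def]

theorem continuousOn_radialFDeriv (hE : ∀ x : E, x ≠ 0 → ContDiffAt ℝ 1 norm x)
    {L : E × F → ℝ × F →L[ℝ] G} {C : Set (E × F)} (hL : ContinuousOn L C)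
    (hL₀ : ∀ t, ((0 : E), t) ∈ C → L (0, t) (1, 0) = 0) :
    ContinuousOn (fun p ↦ radialFDeriv (L p) p.1) C := by
  have hradial : ContinuousOn (fun p ↦ L p (1, 0)) C := hL.clm_apply continuousOn_const
  refine .add ?_ (hL.clm_comp continuousOn_const)
  rintro ⟨x, t⟩ hp
  obtain rfl | hx := eq_or_ne x 0
  · have hzero : Tendsto (fun p ↦ ‖L p (1, 0)‖) (𝓝[C] (0, t)) (𝓝 0) := by
      simpa [ContinuousWithinAt, hL₀ t hp] using (hradial _ hp).norm
    have hbound (p : E × F) : ‖fderiv ℝ norm p.1 ∘L .fst ℝ E F‖ ≤ 1 :=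
      (ContinuousLinearMap.opNorm_comp_le _ _).trans <| mul_le_one₀ (norm_fderiv_norm_le_one p.1)
        (norm_nonneg _) (ContinuousLinearMap.norm_fst_le ℝ E F)
    rw [ContinuousWithinAt, hL₀ t hp, ContinuousLinearMap.smulRight_zero]
    refine squeeze_zero_norm (fun p ↦ ?_) hzero
    rw [ContinuousLinearMap.norm_smulRight_apply]
    exact mul_le_of_le_one_left (norm_nonneg _) (hbound p)
  · have hnorm : ContinuousAt (fun p : E × F ↦ fderiv ℝ norm p.1) (x, t) :=
      ((hE x hx).continuousAt_fderiv one_ne_zero).comp continuousAt_fst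
    exact ((ContinuousLinearMap.smulRightL ℝ (E × F) G).continuous₂.tendsto _).comp
      ((hnorm.clm_comp continuousAt_const).continuousWithinAt.prodMk_nhds (hradial _ hp))

theorem contDiffOn_comp_cylCoords (hE : ∀ x : E, x ≠ 0 → ContDiffAt ℝ 1 norm x)
    {φ : ℝ × F → G} {D : Set (ℝ × F)} (hD : UniqueDiffOn ℝ D) (hφ : ContDiffOn ℝ 1 φ D)
    (hφ₀ : ∀ t, (0, t) ∈ D → fderivWithin ℝ φ D (0, t) (1, 0) = 0) :
    ContDiffOn ℝ 1 (φ ∘ cylCoords) ((cylCoords : E × F → ℝ × F) ⁻¹' D) := by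
  refine contDiffOn_one_of_hasFDerivWithinAt
    (f' := fun p ↦ radialFDeriv (fderivWithin ℝ φ D (cylCoords p)) p.1) ?_ ?_
  · rintro ⟨x, t⟩ hp
    have hφ' := (hφ.differentiableOn one_ne_zero _ hp).hasFDerivWithinAt
    obtain rfl | hx := eq_or_ne x 0
    · rw [mem_preimage, cylCoords_zero_left] at hp
      rw [cylCoords_zero_left] at hφ' ⊢
      exact hasFDerivWithinAt_comp_cylCoords_axis hφ' (hφ₀ t hp)
    · exact hasFDerivWithinAt_comp_cylCoords hφ' ((hE x hx).differentiableAt one_ne_zero)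
  · refine continuousOn_radialFDeriv hE ((hφ.continuousOn_fderivWithin hD le_rfl).comp
      continuous_cylCoords.continuousOn (mapsTo_preimage _ _)) fun t ht ↦ ?_
    rw [mem_preimage, cylCoords_zero_left] at ht
    simpa only [Function.comp_apply, cylCoords_zero_left] using hφ₀ t ht

variable [Nontrivial E]

theorem contDiffOn_of_comp_cylCoords {k : WithTop ℕ∞} {φ : ℝ × F → G} {D : Set (ℝ × F)}
    (hD : ∀ q ∈ D, 0 ≤ q.1)
    (hΦ : ContDiffOn ℝ k (φ ∘ cylCoords) ((cylCoords : E × F → ℝ × F) ⁻¹' D)) :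
    ContDiffOn ℝ k φ D := by
  obtain ⟨e, he⟩ := exists_norm_eq E zero_le_one
  have hray (q : ℝ × F) (hq : q ∈ D) : cylCoords (q.1 • e, q.2) = q :=
    cylCoords_smul_of_norm_eq_one he (hD q hq) q.2
  have hsmooth : ContDiff ℝ k fun q : ℝ × F ↦ (q.1 • e, q.2) := by fun_prop
  refine (hΦ.comp hsmooth.contDiffOn fun q hq ↦ ?_).congr fun q hq ↦ ?_
  · rwa [mem_preimage, hray q hq]
  · simp only [Function.comp_apply, hray q hq]

theorem hasDerivWithinAt_zero_of_comp_norm {f : ℝ → G}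
    (hf : DifferentiableAt ℝ (fun x : E ↦ f ‖x‖) 0) : HasDerivWithinAt f 0 (Ici 0) 0 := by
  obtain ⟨e, he⟩ := exists_norm_eq E zero_le_one
  have hray : HasDerivAt (fun r : ℝ ↦ r • e) e 0 := by
    simpa using (hasDerivAt_id (0 : ℝ)).smul_const e
  have hzero : fderiv ℝ (fun x : E ↦ f ‖x‖) 0 = 0 :=
    fderiv_zero_of_even fun x ↦ congrArg f (norm_neg x)
  have hderiv : HasFDerivAt (fun x : E ↦ f ‖x‖) (0 : E →L[ℝ] G) ((0 : ℝ) • e) := by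
    rw [zero_smul, ← hzero]
    exact hf.hasFDerivAt
  have habs : HasDerivAt (fun r ↦ f |r|) 0 0 := by
    simpa [Function.comp_def, norm_smul, he] using hderiv.comp_hasDerivAt 0 hray
  exact habs.hasDerivWithinAt.congr (fun r hr ↦ by rw [abs_of_nonneg hr]) (by rw [abs_zero])

theorem derivWithin_Icc_zero_of_differentiableOn {φ : ℝ × F → G} {R : ℝ} (hR : 0 < R) {T : Set F}
    (hΦ : DifferentiableOn ℝ (fun p : E × F ↦ φ (‖p.1‖, p.2)) (closedBall 0 R ×ˢ T)) {t : F}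
    (ht : t ∈ T) : derivWithin (fun r ↦ φ (r, t)) (Icc 0 R) 0 = 0 := by
  have hslice : DifferentiableOn ℝ (fun x : E ↦ φ (‖x‖, t)) (closedBall 0 R) :=
    hΦ.comp (f := fun x : E ↦ (x, t)) (by fun_prop) fun x hx ↦ ⟨hx, ht⟩
  have hderiv : HasDerivWithinAt (fun r ↦ φ (r, t)) 0 (Ici 0) 0 :=
    hasDerivWithinAt_zero_of_comp_norm (hslice.differentiableAt (closedBall_mem_nhds 0 hR))
  exact (hderiv.mono Icc_subset_Ici_self).derivWithin
    (uniqueDiffOn_Icc hR 0 (left_mem_Icc.mpr hR.le))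

theorem stmt_18_general (hE : ∀ x : E, x ≠ 0 → ContDiffAt ℝ 1 norm x) {R : ℝ} (hR : 0 < R)
    {T : Set F} (hT : UniqueDiffOn ℝ T) (φ : ℝ × F → G) :
    ContDiffOn ℝ 1 (fun p : E × F ↦ φ (‖p.1‖, p.2)) (closedBall 0 R ×ˢ T) ↔
      ContDiffOn ℝ 1 φ (Icc 0 R ×ˢ T) ∧
        ∀ t ∈ T, derivWithin (fun r ↦ φ (r, t)) (Icc 0 R) 0 = 0 := by
  have h0 : (0 : ℝ) ∈ Icc 0 R := left_mem_Icc.mpr hR.le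
  constructor
  · refine fun hΦ ↦ ⟨?_, fun t ↦
      derivWithin_Icc_zero_of_differentiableOn hR (hΦ.differentiableOn one_ne_zero)⟩
    rw [closedBall_prod_eq_preimage_cylCoords] at hΦ
    exact contDiffOn_of_comp_cylCoords (fun q hq ↦ hq.1.1) hΦ
  · rintro ⟨hφ, hφ₀⟩
    rw [closedBall_prod_eq_preimage_cylCoords]
    refine contDiffOn_comp_cylCoords hE ((uniqueDiffOn_Icc hR).prod hT) hφ fun t ht ↦ ?_
    rw [← derivWithin_comp_prodMk_left (hφ.differentiableOn one_ne_zero _ ht)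
      (uniqueDiffOn_Icc hR 0 h0) ht.2]
    exact hφ₀ t ht.2

end RadialFunctions

/-- The first-order case of Lemma 4.1: a radially symmetric function
`Φ(x,t) = φ(‖x‖,t)` is `C¹` on the closed cylinder `B̄_R × ℝ` iff `φ` is `C¹`
on `[0,R] × ℝ` and its one-sided radial derivative vanishes on the axis. -/
theorem stmt_18 (n : ℕ) (hn : 2 ≤ n) (R : ℝ) (hR : 0 < R)
    (φ : ℝ × ℝ → ℝ) :
    ContDiffOn ℝ 1 (fun p : EuclideanSpace ℝ (Fin n) × ℝ => φ (‖p.1‖, p.2))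
        ((Metric.closedBall (0 : EuclideanSpace ℝ (Fin n)) R) ×ˢ
          (Set.univ : Set ℝ)) ↔
      (ContDiffOn ℝ 1 φ ((Set.Icc 0 R) ×ˢ (Set.univ : Set ℝ)) ∧
        ∀ t : ℝ, derivWithin (fun r => φ (r, t)) (Set.Icc (0:ℝ) R) 0 = 0) := by
  have : Nonempty (Fin n) := ⟨0, by lia⟩
  simpa using stmt_18_general (fun _ ↦ contDiffAt_norm ℝ) hR uniqueDiffOn_univ φ
end
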